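/- Let τ : D → D be injective and suppose there exists 1 < p₀ < ∞ such that for every Banach space E with the UMD property, the operator T_{τ,p₀} ⊗ Id_E is bounded on L^{p₀}_E. Then ‖T_{τ,1}^{−1}‖₁ < ∞, and for every 1 < p < ∞ and every UMD space E, both T_{τ,p} ⊗ Id_E and its inverse T_{τ,p}^{−1} ⊗ Id_E are bounded operators on L^p_E, i.e. ‖T_{τ,p} ⊗ Id_E‖_{L^p_E} · ‖T_{τ,p}^{−1} ⊗ Id_E‖_{L^p_E} < ∞. (The value p₀ = 2 is not excluded.) -/

import Mathlib

open MeasureTheory Set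
open scoped ENNReal NNReal Classical

noncomputable section

/-- A dyadic subinterval of `[0,1)`: the half-open interval
`[k/2^n, (k+1)/2^n)` with `k < 2^n`. -/
structure DyadicI where
  n : ℕ
  k : ℕ
  hk : k < 2 ^ n

instance : Nonempty DyadicI := ⟨⟨0, 0, by norm_num⟩⟩

namespace DyadicI

/-- The length `|I| = 2^{-n}` of a dyadic interval. -/
def len (I : DyadicI) : ℝ := (2 : ℝ) ^ (-(I.n : ℤ))

/-- The left endpoint `k 2^{-n}` of a dyadic interval. -/
def lep (I : DyadicI) : ℝ := (I.k : ℝ) * I.len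

/-- The underlying point set `[k/2^n, (k+1)/2^n)` of a dyadic interval. -/
def toSet (I : DyadicI) : Set ℝ := Set.Ico I.lep (I.lep + I.len)

/-- The `L^∞`-normalized Haar function `h_I`: `1` on the left half of `I`,
`-1` on the right half of `I`, `0` off `I`. -/
def haar (I : DyadicI) (t : ℝ) : ℝ :=
  if t ∈ Set.Ico I.lep (I.lep + I.len / 2) then 1
  else if t ∈ Set.Ico (I.lep + I.len / 2) (I.lep + I.len) then -1
  else 0

end DyadicI

open DyadicI

section Defs

variable {X : Type*} [NormedAddCommGroup X] [NormedSpace ℝ X]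

/-- The square function `𝕊(f)` of the `X`-valued Haar expansion `f = ∑_{I ∈ s} x_I h_I`:
`𝕊(f)(t) = (E_ε ‖∑_I ε_I x_I h_I(t)‖²)^{1/2}`, the average being taken over all
choices of signs `ε_I ∈ {±1}`, `I ∈ s`. -/
def sqFn (s : Finset DyadicI) (x : DyadicI → X) (t : ℝ) : ℝ :=
  Real.sqrt ((∑ ε : {I // I ∈ s} → Bool,
    ‖∑ I ∈ s.attach, ((if ε I then (1 : ℝ) else -1) * haar I.1 t) • x I.1‖ ^ 2) /
      2 ^ s.card)

/-- The `H^p_X` (quasi-)norm of `f = ∑_{I ∈ s} x_I h_I`: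
`‖f‖ = (∫₀¹ 𝕊(f)(t)^p dt)^{1/p}`. -/
def HpNormV (p : ℝ) (s : Finset DyadicI) (x : DyadicI → X) : ℝ :=
  (∫ t in Set.Icc (0 : ℝ) 1, sqFn s x t ^ p) ^ (1 / p)

/-- The coefficients of `(T_{τ,p} ⊗ Id_X)(f)` for `f = ∑_{I ∈ s} x_I h_I`, namely
`(T_{τ,p} ⊗ Id_X)(f) = ∑_{I ∈ s} (|I|/|τ(I)|)^{1/p} x_I h_{τ(I)}`, as a family of
coefficients indexed by the Haar support `τ(s)`. -/
def rearrCoef (τ : DyadicI → DyadicI) (p : ℝ) (s : Finset DyadicI) (x : DyadicI → X) :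
    DyadicI → X :=
  fun J => ∑ I ∈ s, if τ I = J then ((len I / len (τ I)) ^ (1 / p)) • x I else 0

/-- The scalar dyadic square function `S(f) = (∑_I a_I² 1_I)^{1/2}`
of `f = ∑_{I ∈ s} a_I h_I`. -/
def sqFnS (s : Finset DyadicI) (a : DyadicI → ℝ) (t : ℝ) : ℝ :=
  Real.sqrt (∑ I ∈ s, a I ^ 2 * Set.indicator (toSet I) (fun _ => (1 : ℝ)) t)

/-- The scalar dyadic `H^p` (quasi-)norm `‖f‖_{H^p} = ‖S(f)‖_{L^p[0,1]}`. -/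
def HpNormS (p : ℝ) (s : Finset DyadicI) (a : DyadicI → ℝ) : ℝ :=
  (∫ t in Set.Icc (0 : ℝ) 1, sqFnS s a t ^ p) ^ (1 / p)

/-- The coefficients of the scalar rearrangement operator `T_{τ,p}` applied to
`f = ∑_{I ∈ s} a_I h_I`; `T_{τ,p}` is determined by
`T_{τ,p}(h_I/|I|^{1/p}) = h_{τ(I)}/|τ(I)|^{1/p}`. -/
def rearrCoefS (τ : DyadicI → DyadicI) (p : ℝ) (s : Finset DyadicI) (a : DyadicI → ℝ) :
    DyadicI → ℝ :=
  fun J => ∑ I ∈ s, if τ I = J then ((len I / len (τ I)) ^ (1 / p)) * a I else 0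

/-- The operator norm `‖T_{τ,p} ⊗ Id_X : H^p_X → H^p_X‖ ∈ [0,∞]`, computed as the
supremum over finitely supported `f` in the unit ball of `H^p_X`. -/
def hpOpNorm (τ : DyadicI → DyadicI) (p : ℝ) (X : Type*) [NormedAddCommGroup X]
    [NormedSpace ℝ X] : ℝ≥0∞ :=
  ⨆ (s : Finset DyadicI) (x : DyadicI → X) (_ : HpNormV p s x ≤ 1),
    ENNReal.ofReal (HpNormV p (s.image τ) (rearrCoef τ p s x))

/-- The scalar operator norm `‖T_{τ,p} : H^p → H^p‖ ∈ [0,∞]`. -/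
def hpOpNormS (τ : DyadicI → DyadicI) (p : ℝ) : ℝ≥0∞ :=
  ⨆ (s : Finset DyadicI) (a : DyadicI → ℝ) (_ : HpNormS p s a ≤ 1),
    ENNReal.ofReal (HpNormS p (s.image τ) (rearrCoefS τ p s a))

/-- For `H = τ(L)` (so that `σ(J) = I` for `J = τ(I)`, `I ∈ L`), the maximal function
`μ_H(t) = sup_{J ∈ H} (|σ(J)|/|J|) 1_J(t) = sup_{I ∈ L} (|I|/|τ(I)|) 1_{τ(I)}(t)`,
as an `[0,∞]`-valued function. -/
def muSet (τ : DyadicI → DyadicI) (L : Set DyadicI) (t : ℝ) : ℝ≥0∞ :=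
  ⨆ (I : DyadicI) (_ : I ∈ L),
    ENNReal.ofReal (len I / len (τ I) * Set.indicator (toSet (τ I)) (fun _ => (1 : ℝ)) t)

/-- For `H = τ(L)` with `L` finite, the (real-valued) maximal function
`μ_H(t) = max_{I ∈ L} (|I|/|τ(I)|) 1_{τ(I)}(t)`. -/
def muFin (τ : DyadicI → DyadicI) (L : Finset DyadicI) (t : ℝ) : ℝ :=
  ((L.sup fun I =>
    Real.toNNReal (len I / len (τ I) * Set.indicator (toSet (τ I)) (fun _ => (1 : ℝ)) t) : ℝ≥0) : ℝ)

/-- The point set `L* = ⋃_{I ∈ L} I` covered by a collection of dyadic intervals. -/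
def pointSet (L : Set DyadicI) : Set ℝ := ⋃ I ∈ L, toSet I

/-- The constant `C₁ = sup_{H ⊆ τ(D), H ≠ ∅} (1/|σ(H)*|) ∫₀¹ μ_H(t) dt`, where
nonempty collections `H ⊆ τ(D)` are parametrized as `H = τ(L)` for nonempty `L ⊆ D`,
so that `σ(H)* = L*`. -/
def Cone (τ : DyadicI → DyadicI) : ℝ≥0∞ :=
  ⨆ (L : Set DyadicI) (_ : L.Nonempty),
    (∫⁻ t in Set.Icc (0 : ℝ) 1, muSet τ L t) / volume (pointSet L)

/-- The square of the dyadic BMO norm of `g = ∑_{J ∈ s} a_J h_J`: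
`‖g‖_{BMO}² = sup_{I ∈ D} (1/|I|) ∑_{J ⊆ I} a_J² |J|`. -/
def bmoSq (s : Finset DyadicI) (a : DyadicI → ℝ) : ℝ≥0∞ :=
  ⨆ I : DyadicI, ENNReal.ofReal
    ((∑ J ∈ s.filter fun J => toSet J ⊆ toSet I, a J ^ 2 * len J) / len I)

/-- The coefficients of `S_σ(g)` for `g = ∑_{J ∈ s} a_J h_J`, where `σ = τ⁻¹` on `τ(D)`:
`S_σ(h_J) = h_{σ(J)}` for `J ∈ τ(D)` and `S_σ(h_J) = 0` otherwise, so that the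
coefficient of `h_K` in `S_σ(g)` is `a_{τ(K)}` if `τ(K) ∈ s`, and `0` otherwise. -/
def sSigmaCoef (τ : DyadicI → DyadicI) (s : Finset DyadicI) (a : DyadicI → ℝ) :
    DyadicI → ℝ :=
  fun K => if τ K ∈ s then a (τ K) else 0

/-- The Haar support of `S_σ(g)` for `g` with Haar support `s`:
`σ(s ∩ τ(D))`, i.e. the preimage under `τ` of `s`. -/
def sSigmaSupp (τ : DyadicI → DyadicI) (s : Finset DyadicI) : Finset DyadicI :=
  (s.filter fun J => J ∈ Set.range τ).image (Function.invFun τ)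

/-- The operator norm `‖S_σ‖_{BMO} ∈ [0,∞]` of `S_σ` with respect to the dyadic BMO
norm, computed over finitely supported Haar expansions. -/
def bmoOpNorm (τ : DyadicI → DyadicI) : ℝ≥0∞ :=
  ⨆ (s : Finset DyadicI) (a : DyadicI → ℝ) (_ : bmoSq s a ≤ 1),
    (bmoSq (sSigmaSupp τ s) (sSigmaCoef τ s a)) ^ (1 / 2 : ℝ)

/-- The Carleson constant `⟦C⟧ = sup_{I ∈ C} (1/|I|) ∑_{J ∈ C, J ⊆ I} |J| ∈ [0,∞]`
of a collection of dyadic intervals. -/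
def carleson (C : Set DyadicI) : ℝ≥0∞ :=
  ⨆ (I : DyadicI) (_ : I ∈ C),
    (∑' J : {J : DyadicI // J ∈ C ∧ toSet J ⊆ toSet I}, ENNReal.ofReal (len J.1)) /
      ENNReal.ofReal (len I)

/-- The `L^p_X = L^p([0,1]; X)` (Bochner) norm of `f = ∑_{I ∈ s} x_I h_I`. -/
def LpNormV (p : ℝ) (s : Finset DyadicI) (x : DyadicI → X) : ℝ :=
  (∫ t in Set.Icc (0 : ℝ) 1, ‖∑ I ∈ s, haar I t • x I‖ ^ p) ^ (1 / p)

/-- The operator norm `‖T_{τ,p} ⊗ Id_X : L^p_X → L^p_X‖ ∈ [0,∞]`, computed over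
finitely supported Haar expansions. -/
def lpOpNorm (τ : DyadicI → DyadicI) (p : ℝ) (X : Type*) [NormedAddCommGroup X]
    [NormedSpace ℝ X] : ℝ≥0∞ :=
  ⨆ (s : Finset DyadicI) (x : DyadicI → X) (_ : LpNormV p s x ≤ 1),
    ENNReal.ofReal (LpNormV p (s.image τ) (rearrCoef τ p s x))

/-- The operator norm `‖T_{τ,p}^{-1} ⊗ Id_X‖ ∈ [0,∞]` on the span of
`{h_J : J ∈ τ(D)}` with the `L^p_X` norm: the map determined by
`x h_{τ(I)}/|τ(I)|^{1/p} ↦ x h_I/|I|^{1/p}`, i.e. sending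
`g = ∑_{I ∈ L} x_I h_{τ(I)}` to `∑_{I ∈ L} (|τ(I)|/|I|)^{1/p} x_I h_I`. -/
def lpInvOpNorm (τ : DyadicI → DyadicI) (p : ℝ) (X : Type*) [NormedAddCommGroup X]
    [NormedSpace ℝ X] : ℝ≥0∞ :=
  ⨆ (L : Finset DyadicI) (x : DyadicI → X)
    (_ : LpNormV p (L.image τ) (fun J => ∑ I ∈ L, if τ I = J then x I else 0) ≤ 1),
    ENNReal.ofReal (LpNormV p L fun I => ((len (τ I) / len I) ^ (1 / p)) • x I)

/-- The operator norm `‖T_{τ,1}^{-1}‖₁ ∈ [0,∞]` on the span of `{h_J : J ∈ τ(D)}`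
with the dyadic `H¹` norm: the map determined by `h_{τ(I)}/|τ(I)| ↦ h_I/|I|`,
i.e. sending `g = ∑_{I ∈ L} a_I h_{τ(I)}` to `∑_{I ∈ L} (|τ(I)|/|I|) a_I h_I`. -/
def h1InvOpNorm (τ : DyadicI → DyadicI) : ℝ≥0∞ :=
  ⨆ (L : Finset DyadicI) (a : DyadicI → ℝ)
    (_ : HpNormS 1 (L.image τ) (fun J => ∑ I ∈ L, if τ I = J then a I else 0) ≤ 1),
    ENNReal.ofReal (HpNormS 1 L fun I => (len (τ I) / len I) * a I)

/-- The Rademacher average `(E_ε ‖∑_{i<n} ε_i a_i‖^p)^{1/p}` over all choices of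
signs `ε_i ∈ {±1}`. -/
def radAvg (p : ℝ) {Y : Type*} [NormedAddCommGroup Y] [NormedSpace ℝ Y] (n : ℕ)
    (a : Fin n → Y) : ℝ :=
  ((∑ ε : Fin n → Bool, ‖∑ i, (if ε i then (1 : ℝ) else -1) • a i‖ ^ p) / 2 ^ n) ^ (1 / p)

/-- The type-`p` constant `Type_p(Y) ∈ [0,∞]`: the least `C` such that
`(E_ε ‖∑ ε_i a_i‖^p)^{1/p} ≤ C (∑ ‖a_i‖^p)^{1/p}` for all finite families in `Y`. -/
def typeConst (p : ℝ) (Y : Type*) [NormedAddCommGroup Y] [NormedSpace ℝ Y] : ℝ≥0∞ :=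
  sInf {C : ℝ≥0∞ | ∀ (n : ℕ) (a : Fin n → Y),
    ENNReal.ofReal (radAvg p n a) ≤ C * ENNReal.ofReal ((∑ i, ‖a i‖ ^ p) ^ (1 / p))}

/-- The UMD property of a Banach space `E`: for each `1 < r < ∞` the Haar system is
unconditional in `L^r_E`. -/
def IsUMD (E : Type*) [NormedAddCommGroup E] [NormedSpace ℝ E] : Prop :=
  ∀ r : ℝ, 1 < r → ∃ β : ℝ, ∀ (s : Finset DyadicI) (x : DyadicI → E) (ε : DyadicI → ℝ),
    (∀ I, ε I = 1 ∨ ε I = -1) →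
    LpNormV r s (fun I => ε I • x I) ≤ β * LpNormV r s x

/-- `B` is a block in `L` with top `I`: `B ⊆ L`, `I` is the unique maximal interval
of `B`, and `B` is order-convex in `L` between its elements and `I`. -/
def IsBlock (L : Set DyadicI) (B : Set DyadicI) (I : DyadicI) : Prop :=
  B ⊆ L ∧ I ∈ B ∧ (∀ J ∈ B, toSet J ⊆ toSet I) ∧
    ∀ J ∈ B, ∀ K ∈ L, toSet J ⊆ toSet K → toSet K ⊆ toSet I → K ∈ B

/-- `G₁(K | E)`: the maximal dyadic intervals of `E` strictly contained in `K`. -/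
def gen1 (K : DyadicI) (E : Set DyadicI) : Set DyadicI :=
  {J | J ∈ E ∧ toSet J ⊂ toSet K ∧
    ∀ J' ∈ E, toSet J' ⊂ toSet K → toSet J ⊆ toSet J' → J' = J}

end Defs

/-!
A finite Haar expansion is a sum of signed coefficients along the paths of the dyadic tree, and its
`L^p` norm is the average over the paths of a fixed level. For coefficients that are multiples of
distinct unit vectors of `ℓ^q`, the `q`-th power of its norm is an unsigned path sum; since `ℓ^q` is
UMD, boundedness of `T_{τ,p₀} ⊗ Id` for some `q < p₀` compares path sums, and a transposition turns
this into a maximal estimate for `τ⁻¹`: it controls the `L¹` norm of the path maximum of suitably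
renormalised nonnegative coefficients. Duality, through the UMD space of bounded functionals, then
gives boundedness of the inverse operator.

To pass from `L^q` to `L^p` with `p < q`, divide the coefficients by a power of a predictable
majorant of the expansion, apply the `L^q` bound, and undo the division on the range side with Abel
summation, Hölder's inequality and the maximal estimate. Larger exponents follow by duality.
The same factorisation, with `√(partial square function)` as majorant, yields the `H¹` bound.
-/

namespace HaarRearrangement

/-! ### Averages over the levels of the dyadic tree -/

/-- The average of `φ` over level `N` of the dyadic tree. The nodes of level `n` are the
`j < 2 ^ n`, and the children of `j` are `2 * j` and `2 * j + 1`, so its parent is `j / 2`. -/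
def levelAvg (N : ℕ) (φ : ℕ → ℝ) : ℝ := Finset.expect (Finset.range (2 ^ N)) φ

section LevelAvg

variable {N : ℕ} {φ ψ : ℕ → ℝ}

lemma levelAvg_eq_sum_div (N : ℕ) (φ : ℕ → ℝ) :
    levelAvg N φ = (∑ j ∈ Finset.range (2 ^ N), φ j) / 2 ^ N := by
  simp [levelAvg, Finset.expect_eq_sum_div_card]

lemma levelAvg_mono (h : ∀ j < 2 ^ N, φ j ≤ ψ j) : levelAvg N φ ≤ levelAvg N ψ :=
  Finset.expect_le_expect fun j hj => h j (Finset.mem_range.1 hj)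

lemma levelAvg_congr (h : ∀ j < 2 ^ N, φ j = ψ j) : levelAvg N φ = levelAvg N ψ :=
  Finset.expect_congr rfl fun j hj => h j (Finset.mem_range.1 hj)

lemma levelAvg_nonneg (h : ∀ j, 0 ≤ φ j) : 0 ≤ levelAvg N φ :=
  Finset.expect_nonneg fun j _ => h j

lemma levelAvg_add (N : ℕ) (φ ψ : ℕ → ℝ) :
    levelAvg N (fun j => φ j + ψ j) = levelAvg N φ + levelAvg N ψ :=
  Finset.expect_add_distrib _ _ _

lemma levelAvg_sub (N : ℕ) (φ ψ : ℕ → ℝ) :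
    levelAvg N (fun j => φ j - ψ j) = levelAvg N φ - levelAvg N ψ :=
  Finset.expect_sub_distrib _ _ _

lemma levelAvg_mul (N : ℕ) (a : ℝ) (φ : ℕ → ℝ) :
    levelAvg N (fun j => a * φ j) = a * levelAvg N φ :=
  (Finset.mul_expect _ _ _).symm

lemma levelAvg_const (N : ℕ) (a : ℝ) : levelAvg N (fun _ => a) = a :=
  Finset.expect_const (by simp) a

lemma levelAvg_sum {ι : Type*} (N : ℕ) (L : Finset ι) (φ : ι → ℕ → ℝ) :
    levelAvg N (fun j => ∑ i ∈ L, φ i j) = ∑ i ∈ L, levelAvg N (φ i) :=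
  Finset.expect_sum_comm _ _ _

lemma sum_range_two_mul (n : ℕ) (φ : ℕ → ℝ) :
    ∑ j ∈ Finset.range (2 * n), φ j = ∑ j ∈ Finset.range n, (φ (2 * j) + φ (2 * j + 1)) := by
  induction n with
  | zero => simp
  | succ n ih =>
    rw [mul_add_one, Finset.sum_range_succ, Finset.sum_range_succ, ih, Finset.sum_range_succ,
      add_assoc]

lemma levelAvg_succ (N : ℕ) (φ : ℕ → ℝ) :
    levelAvg (N + 1) φ = levelAvg N (fun j => (φ (2 * j) + φ (2 * j + 1)) / 2) := by
  rw [levelAvg_eq_sum_div, levelAvg_eq_sum_div, pow_succ', sum_range_two_mul, ← Finset.sum_div,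
    pow_succ', div_div]

lemma two_mul_add_one_div_two (j : ℕ) : (2 * j + 1) / 2 = j := by lia

lemma levelAvg_div_two (N : ℕ) (φ : ℕ → ℝ) :
    levelAvg (N + 1) (fun c => φ (c / 2)) = levelAvg N φ := by
  rw [levelAvg_succ]
  simp only [Nat.mul_div_cancel_left _ two_pos, two_mul_add_one_div_two, add_self_div_two]

lemma levelAvg_mul_le_of_holderConjugate {p q : ℝ} (hpq : p.HolderConjugate q)
    (hφ : ∀ j, 0 ≤ φ j) (hψ : ∀ j, 0 ≤ ψ j) :
    levelAvg N (fun j => φ j * ψ j) ≤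
      levelAvg N (fun j => φ j ^ p) ^ (1 / p) * levelAvg N (fun j => ψ j ^ q) ^ (1 / q) := by
  have holder := Real.inner_le_Lp_mul_Lq_of_nonneg (Finset.range (2 ^ N)) hpq
    (fun j _ => hφ j) (fun j _ => hψ j)
  have split_card : (2 : ℝ) ^ N = ((2 : ℝ) ^ N) ^ (1 / p) * ((2 : ℝ) ^ N) ^ (1 / q) := by
    rw [← Real.rpow_add (by positivity), one_div, one_div, hpq.inv_add_inv_eq_one, Real.rpow_one]
  have sum_nonneg (χ : ℕ → ℝ) (hχ : ∀ j, 0 ≤ χ j) (r : ℝ) :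
      0 ≤ ∑ j ∈ Finset.range (2 ^ N), χ j ^ r :=
    Finset.sum_nonneg fun j _ => Real.rpow_nonneg (hχ j) _
  simp only [levelAvg_eq_sum_div]
  rw [Real.div_rpow (sum_nonneg φ hφ p) (by positivity),
    Real.div_rpow (sum_nonneg ψ hψ q) (by positivity), div_mul_div_comm, ← split_card]
  gcongr

lemma levelAvg_rpow_mul_rpow_le {a b : ℝ} (ha : 0 < a) (hb : 0 < b) (hab : a + b = 1)
    (hφ : ∀ j, 0 ≤ φ j) (hψ : ∀ j, 0 ≤ ψ j) :
    levelAvg N (fun j => φ j ^ a * ψ j ^ b) ≤ levelAvg N φ ^ a * levelAvg N ψ ^ b := by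
  have holder := levelAvg_mul_le_of_holderConjugate (N := N) (.inv_inv ha hb hab)
    (fun j => Real.rpow_nonneg (hφ j) a) (fun j => Real.rpow_nonneg (hψ j) b)
  simpa only [one_div, inv_inv, Real.rpow_rpow_inv (hφ _) ha.ne',
    Real.rpow_rpow_inv (hψ _) hb.ne'] using holder

end LevelAvg

lemma le_rpow_one_div_mul_of_le_mul_rpow {x y K a : ℝ} (ha : 0 < a) (hx : 0 ≤ x) (hy : 0 ≤ y)
    (hK : 0 ≤ K) (h : x ≤ K * y ^ a * x ^ (1 - a)) : x ≤ K ^ (1 / a) * y := by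
  rcases hx.eq_or_lt with rfl | hx
  · positivity
  have hxa : x ^ a ≤ K * y ^ a := by
    refine le_of_mul_le_mul_right ?_ (Real.rpow_pos_of_pos hx (1 - a))
    rwa [← Real.rpow_add hx, add_sub_cancel, Real.rpow_one]
  calc x = (x ^ a) ^ (1 / a) := by rw [one_div, Real.rpow_rpow_inv hx.le ha.ne']
    _ ≤ (K * y ^ a) ^ (1 / a) := by gcongr
    _ = K ^ (1 / a) * y := by
      rw [Real.mul_rpow hK (by positivity), one_div, Real.rpow_rpow_inv hy ha.ne']

/-! ### Sums and maxima along the paths of the tree -/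

section Paths

variable {E : Type*} [NormedAddCommGroup E] [NormedSpace ℝ E]

/-- The value at node `c` of level `n` of the Haar expansion with coefficient `X m j` at
node `j` of level `m`: the sum of the coefficients at the strict ancestors of `c`, signed
`+` or `-` according to whether the path to `c` turns left or right there. -/
def haarSum (X : ℕ → ℕ → E) : ℕ → ℕ → E
  | 0, _ => 0
  | n + 1, c => haarSum X n (c / 2) + (-1 : ℝ) ^ c • X n (c / 2)

/-- The sum of `W` over the strict ancestors of node `c` of level `n`. -/
def pathSum (W : ℕ → ℕ → ℝ) : ℕ → ℕ → ℝ
  | 0, _ => 0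
  | n + 1, c => pathSum W n (c / 2) + W n (c / 2)

/-- The maximum of `0` and of the values of `m` at the strict ancestors of node `c` of
level `n`. -/
def pathMax (m : ℕ → ℕ → ℝ) : ℕ → ℕ → ℝ
  | 0, _ => 0
  | n + 1, c => max (pathMax m n (c / 2)) (m n (c / 2))

/-- The maximum of `0` and of the values of `m` at node `j` of level `n` and at its
ancestors. -/
def runMax (m : ℕ → ℕ → ℝ) (n j : ℕ) : ℝ := max (pathMax m n j) (m n j)

lemma haarSum_succ (X : ℕ → ℕ → E) (n c : ℕ) :
    haarSum X (n + 1) c = haarSum X n (c / 2) + (-1 : ℝ) ^ c • X n (c / 2) := rfl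

lemma haarSum_two_mul (X : ℕ → ℕ → E) (n j : ℕ) :
    haarSum X (n + 1) (2 * j) = haarSum X n j + X n j := by
  simp [haarSum_succ]

lemma haarSum_two_mul_add_one (X : ℕ → ℕ → E) (n j : ℕ) :
    haarSum X (n + 1) (2 * j + 1) = haarSum X n j - X n j := by
  simp [haarSum_succ, two_mul_add_one_div_two, pow_succ, sub_eq_add_neg]

lemma haarSum_add (X Y : ℕ → ℕ → E) (n c : ℕ) :
    haarSum (X + Y) n c = haarSum X n c + haarSum Y n c := by
  induction n generalizing c with
  | zero => simp [haarSum]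
  | succ n ih => simp only [haarSum_succ, ih, Pi.add_apply]; module

lemma map_haarSum {E' : Type*} [NormedAddCommGroup E'] [NormedSpace ℝ E'] (T : E →ₗ[ℝ] E')
    (X : ℕ → ℕ → E) (n c : ℕ) : T (haarSum X n c) = haarSum (fun n j => T (X n j)) n c := by
  induction n generalizing c with
  | zero => simp [haarSum]
  | succ n ih => simp only [haarSum_succ, map_add, ih, map_smul]

lemma haarSum_smul (a : ℝ) (X : ℕ → ℕ → E) (n c : ℕ) :
    haarSum (a • X) n c = a • haarSum X n c :=
  (map_haarSum (LinearMap.lsmul ℝ E a) X n c).symm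

lemma div_two_lt_two_pow {n c : ℕ} (h : c < 2 ^ (n + 1)) : c / 2 < 2 ^ n := by
  rw [pow_succ] at h; lia

lemma haarSum_congr {X Y : ℕ → ℕ → E} {n : ℕ} (h : ∀ m < n, ∀ j < 2 ^ m, X m j = Y m j) {c : ℕ}
    (hc : c < 2 ^ n) : haarSum X n c = haarSum Y n c := by
  induction n generalizing c with
  | zero => rfl
  | succ n ih =>
    rw [haarSum_succ, haarSum_succ, h n n.lt_succ_self _ (div_two_lt_two_pow hc),
      ih (fun m hm => h m (hm.trans n.lt_succ_self)) (div_two_lt_two_pow hc)]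

lemma runMax_succ (m : ℕ → ℕ → ℝ) (n c : ℕ) :
    runMax m (n + 1) c = max (runMax m n (c / 2)) (m (n + 1) c) := rfl

lemma pathMax_nonneg (m : ℕ → ℕ → ℝ) (n c : ℕ) : 0 ≤ pathMax m n c := by
  induction n generalizing c with
  | zero => exact le_rfl
  | succ n ih => exact le_max_of_le_left (ih _)

lemma runMax_nonneg (m : ℕ → ℕ → ℝ) (n c : ℕ) : 0 ≤ runMax m n c :=
  le_max_of_le_left (pathMax_nonneg _ _ _)

lemma le_runMax (m : ℕ → ℕ → ℝ) (n c : ℕ) : m n c ≤ runMax m n c := le_max_right _ _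

lemma pathMax_mono {a b : ℕ → ℕ → ℝ} (h : ∀ n j, a n j ≤ b n j) (n c : ℕ) :
    pathMax a n c ≤ pathMax b n c := by
  induction n generalizing c with
  | zero => exact le_rfl
  | succ n ih => exact max_le_max (ih _) (h _ _)

lemma pathMax_rpow {a : ℕ → ℕ → ℝ} (h : ∀ n j, 0 ≤ a n j) {e : ℝ} (he : 0 < e) (n c : ℕ) :
    pathMax (fun n j => a n j ^ e) n c = pathMax a n c ^ e := by
  induction n generalizing c with
  | zero => simp [pathMax, Real.zero_rpow he.ne']
  | succ n ih => simp only [pathMax, ih, Real.rpow_max (pathMax_nonneg _ _ _) (h _ _) he.le]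

lemma pathMax_runMax (m : ℕ → ℕ → ℝ) (n c : ℕ) : pathMax (runMax m) n c = pathMax m n c := by
  induction n generalizing c with
  | zero => rfl
  | succ n ih =>
    change max (pathMax (runMax m) n (c / 2)) (max (pathMax m n (c / 2)) (m n (c / 2))) = _
    rw [ih, max_eq_right (le_max_left _ _)]
    rfl

lemma pathSum_nonneg {W : ℕ → ℕ → ℝ} (h : ∀ n j, 0 ≤ W n j) (n c : ℕ) : 0 ≤ pathSum W n c := by
  induction n generalizing c with
  | zero => exact le_rfl
  | succ n ih => exact add_nonneg (ih _) (h _ _)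

/-- The `p`-th power of the `L^p` norm of the Haar expansion with coefficients `X n j`,
`n < N`. -/
def haarMoment (p : ℝ) (N : ℕ) (X : ℕ → ℕ → E) : ℝ := levelAvg N fun c => ‖haarSum X N c‖ ^ p

lemma haarMoment_nonneg (p : ℝ) (N : ℕ) (X : ℕ → ℕ → E) : 0 ≤ haarMoment p N X :=
  levelAvg_nonneg fun _ => Real.rpow_nonneg (norm_nonneg _) _

lemma haarMoment_congr {p : ℝ} {N : ℕ} {X Y : ℕ → ℕ → E}
    (h : ∀ n < N, ∀ j < 2 ^ n, X n j = Y n j) : haarMoment p N X = haarMoment p N Y :=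
  levelAvg_congr fun c hc => by rw [haarSum_congr h hc]

lemma haarMoment_zero {p : ℝ} (hp : p ≠ 0) (X : ℕ → ℕ → E) : haarMoment p 0 X = 0 := by
  simp [haarMoment, haarSum, Real.zero_rpow hp, levelAvg_const]

end Paths

/-! ### Doob's maximal inequality -/

/-- Submartingales for the filtration generated by the levels of the dyadic tree. -/
def IsTreeSubmartingale (u : ℕ → ℕ → ℝ) : Prop :=
  ∀ n j, u n j ≤ (u (n + 1) (2 * j) + u (n + 1) (2 * j + 1)) / 2

section Doob

lemma rpow_sub_rpow_le {p x y : ℝ} (hp : 1 < p) (hx : 0 ≤ x) (hxy : x ≤ y) :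
    y ^ p - x ^ p ≤ p / (p - 1) * ((y ^ (p - 1) - x ^ (p - 1)) * y) := by
  have hp0 : 0 < p := by linarith
  have hp1 : 0 < p - 1 := by linarith
  have hy : 0 ≤ y := hx.trans hxy
  have young : x ^ (p - 1) * y ≤ (p - 1) / p * x ^ p + 1 / p * y ^ p := by
    have h := Real.geom_mean_le_arith_mean2_weighted (w₁ := (p - 1) / p) (w₂ := 1 / p)
      (p₁ := x ^ p) (p₂ := y ^ p) (by positivity) (by positivity) (by positivity) (by positivity)
      (by field_simp; ring)
    rwa [← Real.rpow_mul hx, mul_div_cancel₀ _ hp0.ne', one_div,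
      Real.rpow_rpow_inv hy hp0.ne', ← one_div] at h
  have hyp : y ^ (p - 1) * y = y ^ p := by
    rw [← Real.rpow_add_one' hy (by linarith), sub_add_cancel]
  calc y ^ p - x ^ p = p / (p - 1) * (y ^ p - ((p - 1) / p * x ^ p + 1 / p * y ^ p)) := by
        field_simp; ring
    _ ≤ p / (p - 1) * (y ^ p - x ^ (p - 1) * y) := by gcongr
    _ = p / (p - 1) * ((y ^ (p - 1) - x ^ (p - 1)) * y) := by rw [sub_mul, hyp]

variable {u : ℕ → ℕ → ℝ} {p : ℝ}

lemma IsTreeSubmartingale.levelAvg_runMax_rpow_le_mul (hu : ∀ n j, 0 ≤ u n j)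
    (hsub : IsTreeSubmartingale u) (hp : 1 < p) (n : ℕ) :
    levelAvg n (fun j => runMax u n j ^ p) ≤
      p / (p - 1) * levelAvg n (fun j => runMax u n j ^ (p - 1) * u n j) := by
  have hp0 : p ≠ 0 := by linarith
  have hp1 : 0 < p - 1 := by linarith
  induction n with
  | zero =>
    rw [← levelAvg_mul]
    refine levelAvg_mono fun j _ => ?_
    have h := rpow_sub_rpow_le hp le_rfl (hu 0 j)
    rw [Real.zero_rpow hp0, Real.zero_rpow hp1.ne', sub_zero, sub_zero] at h
    simpa only [runMax, pathMax, max_eq_right (hu _ _)] using h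
  | succ n ih =>
    have increment : ∀ c, runMax u (n + 1) c ^ p - runMax u n (c / 2) ^ p ≤ p / (p - 1) *
        (runMax u (n + 1) c ^ (p - 1) * u (n + 1) c
          - runMax u n (c / 2) ^ (p - 1) * u (n + 1) c) := by
      intro c
      rw [runMax_succ, ← sub_mul]
      rcases le_total (u (n + 1) c) (runMax u n (c / 2)) with h | h
      · rw [max_eq_left h]; simp
      · rw [max_eq_right h]
        exact rpow_sub_rpow_le hp (runMax_nonneg _ _ _) h
    have sum_increment := levelAvg_mono (N := n + 1) fun c _ => increment c
    rw [levelAvg_sub, levelAvg_mul, levelAvg_div_two n (fun c => runMax u n c ^ p),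
      levelAvg_sub] at sum_increment
    have submartingale : levelAvg n (fun j => runMax u n j ^ (p - 1) * u n j) ≤
        levelAvg (n + 1) (fun c => runMax u n (c / 2) ^ (p - 1) * u (n + 1) c) := by
      rw [levelAvg_succ]
      refine levelAvg_mono fun j _ => ?_
      simp only [Nat.mul_div_cancel_left _ two_pos, two_mul_add_one_div_two]
      rw [← mul_add, mul_div_assoc]
      exact mul_le_mul_of_nonneg_left (hsub n j) (Real.rpow_nonneg (runMax_nonneg u n j) _)
    have := mul_le_mul_of_nonneg_left submartingale (show 0 ≤ p / (p - 1) by positivity)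
    rw [mul_sub] at sum_increment
    linarith

lemma IsTreeSubmartingale.levelAvg_runMax_rpow_le (hu : ∀ n j, 0 ≤ u n j)
    (hsub : IsTreeSubmartingale u) (hp : 1 < p) (n : ℕ) :
    levelAvg n (fun j => runMax u n j ^ p) ≤
      (p / (p - 1)) ^ p * levelAvg n (fun j => u n j ^ p) := by
  have hp0 : 0 < p := by linarith
  have hp1 : 0 < p - 1 := by linarith
  have holder := levelAvg_rpow_mul_rpow_le (N := n) (a := 1 - 1 / p) (b := 1 / p)
    (by rw [one_sub_div hp0.ne']; positivity) (by positivity) (by ring)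
    (fun j => Real.rpow_nonneg (runMax_nonneg u n j) p) (fun j => Real.rpow_nonneg (hu n j) p)
  simp only [← Real.rpow_mul (runMax_nonneg u n _), ← Real.rpow_mul (hu n _), mul_one_sub,
    mul_one_div_cancel hp0.ne', Real.rpow_one] at holder
  have self_improve := le_rpow_one_div_mul_of_le_mul_rpow (a := 1 / p) (K := p / (p - 1))
    (by positivity) (levelAvg_nonneg fun j => Real.rpow_nonneg (runMax_nonneg u n j) p)
    (levelAvg_nonneg (N := n) fun j => Real.rpow_nonneg (hu n j) p) (by positivity)
    ((hsub.levelAvg_runMax_rpow_le_mul hu hp n).trans (by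
      rw [mul_assoc, mul_comm (_ ^ (1 / p))]
      exact mul_le_mul_of_nonneg_left holder (by positivity)))
  rwa [one_div_one_div] at self_improve

variable {E : Type*} [NormedAddCommGroup E] [NormedSpace ℝ E]

lemma isTreeSubmartingale_norm_haarSum (X : ℕ → ℕ → E) :
    IsTreeSubmartingale fun n j => ‖haarSum X n j‖ := fun n j => by
  have h := norm_add_le (haarSum X (n + 1) (2 * j)) (haarSum X (n + 1) (2 * j + 1))
  have : haarSum X (n + 1) (2 * j) + haarSum X (n + 1) (2 * j + 1) = (2 : ℝ) • haarSum X n j := by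
    rw [haarSum_two_mul, haarSum_two_mul_add_one]; module
  rw [this, norm_smul, Real.norm_two] at h
  linarith

lemma levelAvg_runMax_norm_haarSum_rpow_le (hp : 1 < p) (N : ℕ) (X : ℕ → ℕ → E) :
    levelAvg N (fun j => runMax (fun n j => ‖haarSum X n j‖) N j ^ p) ≤
      (p / (p - 1)) ^ p * haarMoment p N X :=
  (isTreeSubmartingale_norm_haarSum X).levelAvg_runMax_rpow_le (fun _ _ => norm_nonneg _) hp N

/-- The conditional expectation, given level `n`, of the norm of the Haar sum at
level `n + 1`. -/
def stepAvg (X : ℕ → ℕ → E) (n j : ℕ) : ℝ :=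
  (‖haarSum X (n + 1) (2 * j)‖ + ‖haarSum X (n + 1) (2 * j + 1)‖) / 2

/-- The running maximum of `stepAvg X`: an increasing majorant of the norms of the
coefficients `X` and, up to the factor `2`, of the Haar sums one level further down. -/
def predMax (X : ℕ → ℕ → E) : ℕ → ℕ → ℝ := runMax (stepAvg X)

variable (X : ℕ → ℕ → E)

lemma stepAvg_nonneg (n j : ℕ) : 0 ≤ stepAvg X n j := by unfold stepAvg; positivity

lemma norm_haarSum_le_stepAvg (n j : ℕ) : ‖haarSum X n j‖ ≤ stepAvg X n j :=
  isTreeSubmartingale_norm_haarSum X n j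

lemma norm_le_stepAvg (n j : ℕ) : ‖X n j‖ ≤ stepAvg X n j := by
  have h := norm_sub_le (haarSum X (n + 1) (2 * j)) (haarSum X (n + 1) (2 * j + 1))
  have : haarSum X (n + 1) (2 * j) - haarSum X (n + 1) (2 * j + 1) = (2 : ℝ) • X n j := by
    rw [haarSum_two_mul, haarSum_two_mul_add_one]; module
  rw [this, norm_smul, Real.norm_two] at h
  unfold stepAvg
  linarith

lemma isTreeSubmartingale_stepAvg : IsTreeSubmartingale (stepAvg X) := fun n j =>
  div_le_div_of_nonneg_right (add_le_add (norm_haarSum_le_stepAvg X (n + 1) (2 * j))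
    (norm_haarSum_le_stepAvg X (n + 1) (2 * j + 1))) zero_le_two

lemma predMax_nonneg (n j : ℕ) : 0 ≤ predMax X n j := runMax_nonneg _ _ _

lemma norm_le_predMax (n j : ℕ) : ‖X n j‖ ≤ predMax X n j :=
  (norm_le_stepAvg X n j).trans (le_runMax _ _ _)

lemma norm_haarSum_succ_le (n c : ℕ) : ‖haarSum X (n + 1) c‖ ≤ 2 * predMax X n (c / 2) := by
  have h := norm_add_le (haarSum X n (c / 2)) ((-1 : ℝ) ^ c • X n (c / 2))
  rw [norm_smul, Real.norm_eq_abs, abs_neg_one_pow, one_mul] at h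
  have := (norm_haarSum_le_stepAvg X n (c / 2)).trans (le_runMax (stepAvg X) _ _)
  have := norm_le_predMax X n (c / 2)
  rw [haarSum_succ]
  unfold predMax at *
  linarith

lemma pathMax_predMax_succ (n c : ℕ) : pathMax (predMax X) (n + 1) c = predMax X n (c / 2) :=
  pathMax_runMax _ _ _

lemma levelAvg_pathMax_predMax_rpow_le {p : ℝ} (hp : 1 < p) (N : ℕ) :
    levelAvg N (fun c => pathMax (predMax X) N c ^ p) ≤ (p / (p - 1)) ^ p * haarMoment p N X := by
  cases N with
  | zero =>
    have hp0 : p ≠ 0 := by linarith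
    simp [haarMoment_zero hp0, pathMax, Real.zero_rpow hp0, levelAvg_const]
  | succ N =>
    simp only [pathMax_predMax_succ]
    rw [levelAvg_div_two N (fun c => predMax X N c ^ p)]
    refine ((isTreeSubmartingale_stepAvg X).levelAvg_runMax_rpow_le (stepAvg_nonneg X) hp N).trans
      (mul_le_mul_of_nonneg_left ?_ ?_)
    · rw [haarMoment, levelAvg_succ]
      refine levelAvg_mono fun j _ => ?_
      have convex := (convexOn_rpow hp.le).2 (norm_nonneg (haarSum X (N + 1) (2 * j)))
        (norm_nonneg (haarSum X (N + 1) (2 * j + 1))) one_half_pos.le one_half_pos.le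
        (add_halves 1)
      simp only [smul_eq_mul, one_div_mul_eq_div, ← add_div] at convex
      exact convex
    · have : 0 < p - 1 := by linarith
      positivity

end Doob

/-! ### Weighted Haar sums -/

section Weights

variable {E : Type*} [NormedAddCommGroup E] [NormedSpace ℝ E] {m : ℕ → ℕ → ℝ}

lemma haarSum_comp_runMax_smul_sub_succ (g : ℝ → ℝ) (m : ℕ → ℕ → ℝ) (X : ℕ → ℕ → E) (n c : ℕ) :
    haarSum (fun n j => g (runMax m n j) • X n j) (n + 1) c
        - g (pathMax m (n + 1) c) • haarSum X (n + 1) c =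
      (haarSum (fun n j => g (runMax m n j) • X n j) n (c / 2)
        - g (pathMax m n (c / 2)) • haarSum X n (c / 2)) +
      (g (pathMax m n (c / 2)) - g (pathMax m (n + 1) c)) • haarSum X n (c / 2) := by
  simp only [haarSum_succ, pathMax, runMax]
  module

lemma pathMax_le_succ (m : ℕ → ℕ → ℝ) (n c : ℕ) : pathMax m n (c / 2) ≤ pathMax m (n + 1) c :=
  le_max_left _ _

lemma rpow_neg_mul_self {a : ℝ} (ha : 0 ≤ a) {θ : ℝ} (hθ : θ < 1) :
    a ^ (-θ) * a = a ^ (1 - θ) := by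
  rw [← Real.rpow_add_one' ha (by linarith), neg_add_eq_sub]

lemma abs_rpow_neg_sub_rpow_neg_mul_le {θ a b : ℝ} (h0 : 0 < θ) (h1 : θ < 1) (ha : 0 ≤ a)
    (hab : a ≤ b) :
    |a ^ (-θ) - b ^ (-θ)| * a ≤ θ / (1 - θ) * (b ^ (1 - θ) - a ^ (1 - θ)) := by
  have h1' : 0 < 1 - θ := sub_pos.2 h1
  rcases ha.eq_or_lt with rfl | ha
  · have := Real.rpow_nonneg hab (1 - θ)
    rw [Real.zero_rpow h1'.ne', mul_zero, sub_zero]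
    positivity
  have hb : 0 < b := ha.trans_le hab
  have antitone : b ^ (-θ) ≤ a ^ (-θ) := Real.rpow_le_rpow_of_nonpos ha hab (by linarith)
  have young : a ^ (1 - θ) ≤ (1 - θ) * (b ^ (-θ) * a) + θ * b ^ (1 - θ) := by
    have h := Real.geom_mean_le_arith_mean2_weighted h1'.le h0.le ha.le hb.le (by ring)
    calc a ^ (1 - θ) = b ^ (-θ) * (a ^ (1 - θ) * b ^ θ) := by
          rw [mul_left_comm, ← Real.rpow_add hb, neg_add_cancel, Real.rpow_zero, mul_one]
      _ ≤ b ^ (-θ) * ((1 - θ) * a + θ * b) := by gcongr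
      _ = (1 - θ) * (b ^ (-θ) * a) + θ * b ^ (1 - θ) := by
          rw [← rpow_neg_mul_self hb.le h1]; ring
  rw [abs_of_nonneg (sub_nonneg.2 antitone), sub_mul, rpow_neg_mul_self ha.le h1,
    div_mul_eq_mul_div, le_div_iff₀ h1']
  linarith

lemma norm_haarSum_runMax_rpow_neg_smul_sub_le {θ C : ℝ} (h0 : 0 < θ) (h1 : θ < 1) (hC : 0 ≤ C)
    {X : ℕ → ℕ → E} (hX : ∀ n c, ‖haarSum X n c‖ ≤ C * pathMax m n c) (n c : ℕ) :
    ‖haarSum (fun n j => runMax m n j ^ (-θ) • X n j) n c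
        - pathMax m n c ^ (-θ) • haarSum X n c‖ ≤
      C * (θ / (1 - θ) * pathMax m n c ^ (1 - θ)) := by
  induction n generalizing c with
  | zero => simp [haarSum, pathMax, Real.zero_rpow (sub_pos.2 h1).ne']
  | succ n ih =>
    rw [haarSum_comp_runMax_smul_sub_succ (fun t => t ^ (-θ)) m X n c]
    refine (norm_add_le _ _).trans ?_
    rw [norm_smul, Real.norm_eq_abs]
    have last_term := mul_le_mul_of_nonneg_left (hX n (c / 2))
      (abs_nonneg (pathMax m n (c / 2) ^ (-θ) - pathMax m (n + 1) c ^ (-θ)))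
    have telescope := mul_le_mul_of_nonneg_left (abs_rpow_neg_sub_rpow_neg_mul_le h0 h1
      (pathMax_nonneg m n (c / 2)) (pathMax_le_succ m n c)) hC
    linarith [ih (c / 2)]

lemma norm_haarSum_runMax_rpow_neg_smul_le {θ C : ℝ} (h0 : 0 < θ) (h1 : θ < 1) (hC : 0 ≤ C)
    {X : ℕ → ℕ → E} (hX : ∀ n c, ‖haarSum X n c‖ ≤ C * pathMax m n c) (n c : ℕ) :
    ‖haarSum (fun n j => runMax m n j ^ (-θ) • X n j) n c‖ ≤
      C / (1 - θ) * pathMax m n c ^ (1 - θ) := by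
  have h1' : 0 < 1 - θ := sub_pos.2 h1
  have hM := pathMax_nonneg m n c
  have main_term : ‖pathMax m n c ^ (-θ) • haarSum X n c‖ ≤ C * pathMax m n c ^ (1 - θ) := by
    rw [norm_smul, Real.norm_of_nonneg (Real.rpow_nonneg hM _), ← rpow_neg_mul_self hM h1,
      mul_left_comm]
    exact mul_le_mul_of_nonneg_left (hX n c) (Real.rpow_nonneg hM _)
  refine (norm_le_norm_sub_add _ (pathMax m n c ^ (-θ) • haarSum X n c)).trans ?_
  refine (add_le_add (norm_haarSum_runMax_rpow_neg_smul_sub_le h0 h1 hC hX n c)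
    main_term).trans_eq ?_
  field_simp
  ring

lemma norm_haarSum_runMax_smul_sub_le (m : ℕ → ℕ → ℝ) (X : ℕ → ℕ → E) (n c : ℕ) :
    ‖haarSum (fun n j => runMax m n j • X n j) n c - pathMax m n c • haarSum X n c‖ ≤
      pathMax m n c * runMax (fun n j => ‖haarSum X n j‖) n c := by
  induction n generalizing c with
  | zero => simp [haarSum, pathMax]
  | succ n ih =>
    have hle : pathMax m n (c / 2) ≤ pathMax m (n + 1) c := pathMax_le_succ m n c
    rw [haarSum_comp_runMax_smul_sub_succ (fun t => t) m X n c]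
    set R := runMax (fun n j => ‖haarSum X n j‖)
    have increment : ‖(pathMax m n (c / 2) - pathMax m (n + 1) c) • haarSum X n (c / 2)‖ ≤
        (pathMax m (n + 1) c - pathMax m n (c / 2)) * R n (c / 2) := by
      rw [norm_smul, Real.norm_eq_abs, abs_of_nonpos (sub_nonpos.2 hle), neg_sub]
      exact mul_le_mul_of_nonneg_left (le_runMax (fun n j => ‖haarSum X n j‖) _ _)
        (sub_nonneg.2 hle)
    calc _ ≤ pathMax m n (c / 2) * R n (c / 2)
          + (pathMax m (n + 1) c - pathMax m n (c / 2)) * R n (c / 2) :=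
          (norm_add_le _ _).trans (add_le_add (ih _) increment)
      _ = pathMax m (n + 1) c * R n (c / 2) := by ring
      _ ≤ pathMax m (n + 1) c * R (n + 1) c :=
          mul_le_mul_of_nonneg_left (le_max_left _ _) (pathMax_nonneg _ _ _)

lemma norm_haarSum_runMax_smul_le (m : ℕ → ℕ → ℝ) (X : ℕ → ℕ → E) (n c : ℕ) :
    ‖haarSum (fun n j => runMax m n j • X n j) n c‖ ≤
      2 * (pathMax m n c * runMax (fun n j => ‖haarSum X n j‖) n c) := by
  have main_term : ‖pathMax m n c • haarSum X n c‖ ≤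
      pathMax m n c * runMax (fun n j => ‖haarSum X n j‖) n c := by
    rw [norm_smul, Real.norm_of_nonneg (pathMax_nonneg _ _ _)]
    exact mul_le_mul_of_nonneg_left (le_runMax (fun n j => ‖haarSum X n j‖) _ _)
      (pathMax_nonneg _ _ _)
  rw [two_mul]
  exact (norm_le_norm_sub_add _ _).trans
    (add_le_add (norm_haarSum_runMax_smul_sub_le m X n c) main_term)

end Weights

section Factorization

variable {E : Type*} [NormedAddCommGroup E] [NormedSpace ℝ E] {p q : ℝ}

lemma norm_haarSum_le_pathMax_stepAvg (X : ℕ → ℕ → E) (n c : ℕ) :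
    ‖haarSum X n c‖ ≤ 2 * pathMax (stepAvg X) n c := by
  cases n with
  | zero => simp [haarSum, pathMax]
  | succ n => exact norm_haarSum_succ_le X n c

lemma predMax_rpow_smul_cancel (hq : q ≠ 0) (X : ℕ → ℕ → E) (n j : ℕ) :
    (predMax X n j ^ q) ^ (1 / q - 1 / p) • predMax X n j ^ (-(1 - q / p)) • X n j = X n j := by
  rcases (predMax_nonneg X n j).eq_or_lt with h | h
  · have hX := norm_le_predMax X n j
    rw [← h] at hX
    simp [norm_le_zero_iff.1 hX]
  · rw [smul_smul, ← Real.rpow_mul h.le, ← Real.rpow_add h]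
    have : q * (1 / q - 1 / p) + -(1 - q / p) = 0 := by field_simp; ring
    rw [this, Real.rpow_zero, one_smul]

-- Following Garling, `Y` is `X` divided by a power of its predictable majorant `predMax X`.
theorem exists_haarMoment_factorization (hq : 1 < q) (hqp : q < p) : ∃ K : ℝ, 0 ≤ K ∧
    ∀ (N : ℕ) (X : ℕ → ℕ → E), ∃ (a : ℕ → ℕ → ℝ) (Y : ℕ → ℕ → E),
      (∀ n j, 0 ≤ a n j) ∧ (∀ n j, a n j ^ (1 / q - 1 / p) • Y n j = X n j) ∧
      levelAvg N (pathMax a N) ≤ K * haarMoment q N X ∧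
      haarMoment p N Y ≤ K * haarMoment q N X := by
  have hq0 : 0 < q := by linarith
  have hp : 0 < p := hq0.trans hqp
  have hqp1 : q / p < 1 := (div_lt_one hp).2 hqp
  have hq1 : 0 < q - 1 := sub_pos.2 hq
  set D : ℝ := (q / (q - 1)) ^ q with hD
  refine ⟨max D ((2 / (q / p)) ^ p * D), by positivity, fun N X => ⟨fun n j => predMax X n j ^ q,
    fun n j => predMax X n j ^ (-(1 - q / p)) • X n j,
    fun n j => Real.rpow_nonneg (predMax_nonneg X n j) q, predMax_rpow_smul_cancel hq0.ne' X,
    ?_, ?_⟩⟩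
  · refine (levelAvg_congr fun c _ => pathMax_rpow (predMax_nonneg X) hq0 N c).trans_le ?_
    exact (levelAvg_pathMax_predMax_rpow_le X hq N).trans
      (mul_le_mul_of_nonneg_right (le_max_left _ _) (haarMoment_nonneg _ _ _))
  · have pointwise : ∀ c, ‖haarSum (fun n j => predMax X n j ^ (-(1 - q / p)) • X n j) N c‖ ^ p ≤
        (2 / (q / p)) ^ p * pathMax (predMax X) N c ^ q := fun c => by
      have hM := pathMax_nonneg (stepAvg X) N c
      have h := Real.rpow_le_rpow (norm_nonneg _) (norm_haarSum_runMax_rpow_neg_smul_le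
        (sub_pos.2 hqp1) (sub_lt_self 1 (by positivity)) zero_le_two
        (norm_haarSum_le_pathMax_stepAvg X) N c) hp.le
      rwa [sub_sub_cancel, Real.mul_rpow (by positivity) (Real.rpow_nonneg hM _),
        ← Real.rpow_mul hM, div_mul_cancel₀ _ hp.ne', ← pathMax_runMax] at h
    refine (levelAvg_mono fun c _ => pointwise c).trans ?_
    rw [levelAvg_mul]
    refine (mul_le_mul_of_nonneg_left (levelAvg_pathMax_predMax_rpow_le X hq N)
      (by positivity)).trans ?_
    rw [← mul_assoc]
    exact mul_le_mul_of_nonneg_right (le_max_right _ _) (haarMoment_nonneg _ _ _)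

end Factorization

/-! ### Unconditionality of Haar expansions -/

section Unconditional

variable {E : Type*} [NormedAddCommGroup E] [NormedSpace ℝ E] {p q : ℝ}

variable (E) in
/-- Unconditionality of the Haar system in `L^p_E`, that is, the UMD inequality for one
exponent, written on the dyadic tree. -/
def HaarUnconditional (p : ℝ) : Prop :=
  ∃ β : ℝ, 0 ≤ β ∧ ∀ (N : ℕ) (X : ℕ → ℕ → E) (ε : ℕ → ℕ → ℝ),
    (∀ n j, ε n j = 1 ∨ ε n j = -1) →
      haarMoment p N (fun n j => ε n j • X n j) ≤ β * haarMoment p N X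

lemma convexOn_haarMoment (hp : 1 ≤ p) (N : ℕ) :
    ConvexOn ℝ univ (haarMoment p N : (ℕ → ℕ → E) → ℝ) := by
  refine ⟨convex_univ, fun X _ Y _ a b ha hb hab => ?_⟩
  simp only [haarMoment, smul_eq_mul]
  rw [← levelAvg_mul, ← levelAvg_mul, ← levelAvg_add]
  refine levelAvg_mono fun c _ => ?_
  rw [haarSum_add, haarSum_smul, haarSum_smul]
  have triangle : ‖a • haarSum X N c + b • haarSum Y N c‖ ≤
      a • ‖haarSum X N c‖ + b • ‖haarSum Y N c‖ :=
    convexOn_univ_norm.2 (mem_univ _) (mem_univ _) ha hb hab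
  exact (Real.rpow_le_rpow (norm_nonneg _) triangle (by linarith)).trans
    ((convexOn_rpow hp).2 (norm_nonneg _) (norm_nonneg _) ha hb hab)

-- A convex function on the cube `[-1, 1] ^ T` attains its maximum at a vertex.
lemma HaarUnconditional.exists_multiplier_bound (hp : 1 ≤ p) (h : HaarUnconditional E p) :
    ∃ β : ℝ, 0 ≤ β ∧ ∀ (N : ℕ) (X : ℕ → ℕ → E) (ρ : ℕ → ℕ → ℝ), (∀ n j, |ρ n j| ≤ 1) →
      haarMoment p N (fun n j => ρ n j • X n j) ≤ β * haarMoment p N X := by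
  obtain ⟨β, hβ, h⟩ := h
  refine ⟨β, hβ, fun N X ρ hρ => ?_⟩
  let multiply : (Fin N × Fin (2 ^ N) → ℝ) →ₗ[ℝ] ℕ → ℕ → E :=
    { toFun := fun σ n j =>
        if hv : n < N ∧ j < 2 ^ N then σ (⟨n, hv.1⟩, ⟨j, hv.2⟩) • X n j else 0
      map_add' := fun σ σ' => by
        ext n j; by_cases hv : n < N ∧ j < 2 ^ N <;> simp [hv, add_smul]
      map_smul' := fun r σ => by
        ext n j; by_cases hv : n < N ∧ j < 2 ^ N <;> simp [hv, mul_smul] }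
  have multiply_eq (ν : ℕ → ℕ → ℝ) : haarMoment p N (multiply fun v => ν v.1 v.2) =
      haarMoment p N (fun n j => ν n j • X n j) :=
    haarMoment_congr fun n hn j hj => dif_pos ⟨hn, hj.trans (Nat.pow_lt_pow_right one_lt_two hn)⟩
  have mem_cube : (fun v => ρ v.1 v.2 : Fin N × Fin (2 ^ N) → ℝ) ∈
      convexHull ℝ (univ.pi fun _ => {-1, 1}) := mem_convexHull_pi fun v _ => by
    rw [convexHull_pair, segment_eq_Icc (by norm_num)]
    exact abs_le.1 (hρ _ _)
  obtain ⟨σ, hσ, hle⟩ := ((convexOn_haarMoment hp N).comp_linearMap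
    multiply).exists_ge_of_mem_convexHull (subset_univ _) mem_cube
  let ε : ℕ → ℕ → ℝ := fun n j =>
    if hv : n < N ∧ j < 2 ^ N then σ (⟨n, hv.1⟩, ⟨j, hv.2⟩) else 1
  have hεσ : (fun v => ε v.1 v.2 : Fin N × Fin (2 ^ N) → ℝ) = σ := by ext v; simp [ε]
  have hε : ∀ n j, ε n j = 1 ∨ ε n j = -1 := fun n j => by
    by_cases hv : n < N ∧ j < 2 ^ N
    · simpa [ε, hv, or_comm] using hσ (⟨n, hv.1⟩, ⟨j, hv.2⟩) (mem_univ _)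
    · simp [ε, hv]
  rw [Function.comp_apply, Function.comp_apply, ← hεσ, multiply_eq, multiply_eq] at hle
  exact hle.trans (h N X ε hε)

lemma runMax_mul_div_runMax {m : ℕ → ℕ → ℝ} (hm : ∀ n j, 0 ≤ m n j) (n j : ℕ) :
    runMax m n j * (m n j / runMax m n j) = m n j := by
  refine mul_div_cancel_of_imp' fun h => ?_
  exact le_antisymm (h ▸ le_runMax m n j) (hm n j)

lemma haarMoment_runMax_rpow_smul_le (hq : 0 < q) (hqp : q < p) (hp : 1 < p) (N : ℕ)
    {a : ℕ → ℕ → ℝ} (ha : ∀ n j, 0 ≤ a n j) (V : ℕ → ℕ → E) :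
    haarMoment q N (fun n j => runMax (fun n j => a n j ^ (1 / q - 1 / p)) n j • V n j) ≤
      2 ^ q * (levelAvg N (pathMax a N) ^ (1 - q / p) *
        ((p / (p - 1)) ^ p * haarMoment p N V) ^ (q / p)) := by
  have hp0 : 0 < p := by linarith
  have hs : 0 < 1 / q - 1 / p := sub_pos.2 (one_div_lt_one_div_of_lt hq hqp)
  have hqp1 : 0 < 1 - q / p := sub_pos.2 ((div_lt_one hp0).2 hqp)
  set D : ℕ → ℝ := fun c => runMax (fun n j => ‖haarSum V n j‖) N c
  have hD : ∀ c, 0 ≤ D c := fun c => runMax_nonneg _ _ _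
  have hM : ∀ c, 0 ≤ pathMax a N c := pathMax_nonneg a N
  have pointwise : ∀ c, ‖haarSum (fun n j => runMax (fun n j => a n j ^ (1 / q - 1 / p)) n j
      • V n j) N c‖ ^ q ≤ 2 ^ q * (pathMax a N c ^ (1 - q / p) * (D c ^ p) ^ (q / p)) := fun c => by
    refine (Real.rpow_le_rpow (norm_nonneg _) (norm_haarSum_runMax_smul_le _ V N c)
      hq.le).trans_eq ?_
    rw [Real.mul_rpow zero_le_two (mul_nonneg (pathMax_nonneg _ _ _) (hD c)),
      Real.mul_rpow (pathMax_nonneg _ _ _) (hD c), pathMax_rpow ha hs, ← Real.rpow_mul (hM c),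
      ← Real.rpow_mul (hD c), mul_div_cancel₀ _ hp0.ne', sub_mul, one_div_mul_cancel hq.ne',
      one_div_mul_eq_div]
  refine (levelAvg_mono fun c _ => pointwise c).trans ?_
  rw [levelAvg_mul]
  gcongr
  refine (levelAvg_rpow_mul_rpow_le hqp1 (by positivity) (by ring) hM
    fun c => Real.rpow_nonneg (hD c) p).trans ?_
  have hDp : 0 ≤ levelAvg N fun c => D c ^ p := levelAvg_nonneg fun c => Real.rpow_nonneg (hD c) p
  have := levelAvg_nonneg (N := N) hM
  gcongr
  exact levelAvg_runMax_norm_haarSum_rpow_le hp N V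

theorem HaarUnconditional.haarMoment_rpow_smul_le (hq : 1 < q) (hqp : q < p)
    (h : HaarUnconditional E p) : ∃ K : ℝ, 0 ≤ K ∧
      ∀ (N : ℕ) (a : ℕ → ℕ → ℝ) (Z : ℕ → ℕ → E) (R : ℝ), (∀ n j, 0 ≤ a n j) →
        levelAvg N (pathMax a N) ≤ R → haarMoment p N Z ≤ R →
        haarMoment q N (fun n j => a n j ^ (1 / q - 1 / p) • Z n j) ≤ K * R := by
  have hp : 1 < p := hq.trans hqp
  have hp0 : 0 < p := by linarith
  have hp1 : 0 < p - 1 := sub_pos.2 hp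
  have hqp1 : 0 < 1 - q / p := sub_pos.2 ((div_lt_one hp0).2 hqp)
  obtain ⟨β, hβ, h⟩ := h.exists_multiplier_bound hp.le
  refine ⟨2 ^ q * ((p / (p - 1)) ^ p * β) ^ (q / p), by positivity, fun N a Z R ha haR hZR => ?_⟩
  have hR : 0 ≤ R := (haarMoment_nonneg _ _ _).trans hZR
  set m : ℕ → ℕ → ℝ := fun n j => a n j ^ (1 / q - 1 / p)
  have hm0 : ∀ n j, 0 ≤ m n j := fun n j => Real.rpow_nonneg (ha n j) _
  have ratio_le_one : ∀ n j, |m n j / runMax m n j| ≤ 1 := fun n j => by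
    rw [abs_of_nonneg (div_nonneg (hm0 n j) (runMax_nonneg _ _ _))]
    exact div_le_one_of_le₀ (le_runMax _ _ _) (runMax_nonneg _ _ _)
  have factor : (fun n j => m n j • Z n j) =
      fun n j => runMax m n j • (m n j / runMax m n j) • Z n j := by
    simp only [smul_smul, runMax_mul_div_runMax hm0]
  have hM := levelAvg_nonneg (N := N) (pathMax_nonneg a N)
  have hV := haarMoment_nonneg p N fun n j => (m n j / runMax m n j) • Z n j
  rw [factor]
  calc _ ≤ 2 ^ q * (levelAvg N (pathMax a N) ^ (1 - q / p) * ((p / (p - 1)) ^ p *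
          haarMoment p N fun n j => (m n j / runMax m n j) • Z n j) ^ (q / p)) :=
        haarMoment_runMax_rpow_smul_le (by linarith) hqp hp N ha _
    _ ≤ 2 ^ q * (R ^ (1 - q / p) * ((p / (p - 1)) ^ p * (β * R)) ^ (q / p)) := by
        gcongr
        exact (h N Z _ ratio_le_one).trans (by gcongr)
    _ = 2 ^ q * ((p / (p - 1)) ^ p * β) ^ (q / p) * (R ^ (1 - q / p) * R ^ (q / p)) := by
        rw [← mul_assoc _ β R, Real.mul_rpow (by positivity) hR]; ring
    _ = 2 ^ q * ((p / (p - 1)) ^ p * β) ^ (q / p) * R := by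
        rw [← Real.rpow_add' hR (by simp), sub_add_cancel, Real.rpow_one]

theorem HaarUnconditional.of_lt (hq : 1 < q) (hqp : q < p) (h : HaarUnconditional E p) :
    HaarUnconditional E q := by
  obtain ⟨K₁, hK₁, factorization⟩ := exists_haarMoment_factorization (E := E) hq hqp
  obtain ⟨K₂, hK₂, recombine⟩ := h.haarMoment_rpow_smul_le hq hqp
  obtain ⟨β, hβ, h⟩ := h
  refine ⟨K₂ * ((1 + β) * K₁), by positivity, fun N X ε hε => ?_⟩
  obtain ⟨a, Y, ha, hY, maximal, moment⟩ := factorization N X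
  have hX := haarMoment_nonneg q N X
  have hKX : 0 ≤ K₁ * haarMoment q N X := by positivity
  have factor : (fun n j => ε n j • X n j) =
      fun n j => a n j ^ (1 / q - 1 / p) • ε n j • Y n j := by
    funext n j
    rw [smul_comm, hY]
  rw [factor, mul_assoc K₂]
  refine recombine N a _ _ ha (maximal.trans ?_) ((h N Y ε hε).trans ?_)
  · nlinarith
  · nlinarith [mul_le_mul_of_nonneg_left moment hβ]

end Unconditional

/-! ### Duality -/

section Duality

variable {E E' : Type*} [NormedAddCommGroup E] [NormedSpace ℝ E] [NormedAddCommGroup E']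
  [NormedSpace ℝ E'] {p q : ℝ}

lemma norm_add_half_rpow_le (hp : 1 ≤ p) (x y : E) :
    ‖(1 / 2 : ℝ) • (x + y)‖ ^ p ≤ (‖x‖ ^ p + ‖y‖ ^ p) / 2 := by
  have triangle : ‖(1 / 2 : ℝ) • (x + y)‖ ≤ (1 / 2 : ℝ) • ‖x‖ + (1 / 2 : ℝ) • ‖y‖ := by
    rw [smul_add]
    exact convexOn_univ_norm.2 (mem_univ _) (mem_univ _) one_half_pos.le one_half_pos.le
      (add_halves 1)
  refine (Real.rpow_le_rpow (norm_nonneg _) triangle (by linarith)).trans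
    (((convexOn_rpow hp).2 (norm_nonneg x) (norm_nonneg y) one_half_pos.le one_half_pos.le
      (add_halves 1)).trans_eq ?_)
  simp only [smul_eq_mul]
  ring

lemma exists_haarSum_add_const_eq (N : ℕ) (g : ℕ → E) : ∃ (X : ℕ → ℕ → E) (m : E),
    (∀ c < 2 ^ N, haarSum X N c + m = g c) ∧
      ∀ p : ℝ, 1 ≤ p → ‖m‖ ^ p ≤ levelAvg N (fun c => ‖g c‖ ^ p) := by
  induction N generalizing g with
  | zero => exact ⟨0, g 0, by simp [haarSum], by simp [levelAvg]⟩
  | succ N ih =>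
    obtain ⟨X, m, hX, hm⟩ := ih fun j => (1 / 2 : ℝ) • (g (2 * j) + g (2 * j + 1))
    refine ⟨fun n j => if n = N then (1 / 2 : ℝ) • (g (2 * j) - g (2 * j + 1)) else X n j, m,
      fun c hc => ?_, fun p hp => ?_⟩
    · rw [haarSum_succ, if_pos rfl, haarSum_congr (fun n hn j _ => if_neg hn.ne)
        (div_two_lt_two_pow hc), add_right_comm, hX _ (div_two_lt_two_pow hc)]
      obtain ⟨k, rfl | rfl⟩ := Nat.even_or_odd' c
      · rw [Nat.mul_div_cancel_left _ two_pos, (even_two_mul k).neg_one_pow]; module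
      · rw [two_mul_add_one_div_two, (odd_two_mul_add_one k).neg_one_pow]; module
    · rw [levelAvg_succ]
      exact (hm p hp).trans (levelAvg_mono fun j _ => norm_add_half_rpow_le hp _ _)

lemma haarMoment_le_of_haarSum_add_const_eq (hp : 1 ≤ p) {N : ℕ} {g : ℕ → E} {X : ℕ → ℕ → E}
    {m : E} (hX : ∀ c < 2 ^ N, haarSum X N c + m = g c)
    (hm : ‖m‖ ^ p ≤ levelAvg N (fun c => ‖g c‖ ^ p)) :
    haarMoment p N X ≤ 2 ^ p * levelAvg N (fun c => ‖g c‖ ^ p) := by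
  have pointwise : ∀ c < 2 ^ N, ‖haarSum X N c‖ ^ p ≤
      2 ^ p * (1 / 2 * ‖g c‖ ^ p + 1 / 2 * ‖m‖ ^ p) := fun c hc => by
    have : haarSum X N c = (2 : ℝ) • (1 / 2 : ℝ) • (g c + -m) := by
      rw [← hX c hc]; module
    rw [this, norm_smul, Real.norm_two, Real.mul_rpow zero_le_two (norm_nonneg _)]
    refine mul_le_mul_of_nonneg_left ((norm_add_half_rpow_le hp _ _).trans_eq ?_) (by positivity)
    rw [norm_neg]; ring
  refine (levelAvg_mono pointwise).trans ?_
  rw [levelAvg_mul, levelAvg_add, levelAvg_mul, levelAvg_const]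
  gcongr
  linarith

lemma levelAvg_pairing_haarSum (B : E →ₗ[ℝ] E' →ₗ[ℝ] ℝ) (X : ℕ → ℕ → E) (Y : ℕ → ℕ → E')
    (N : ℕ) : levelAvg N (fun c => B (haarSum X N c) (haarSum Y N c)) =
      ∑ n ∈ Finset.range N, levelAvg n (fun j => B (X n j) (Y n j)) := by
  induction N with
  | zero => simp [haarSum, levelAvg]
  | succ N ih =>
    rw [Finset.sum_range_succ, ← ih, levelAvg_succ, ← levelAvg_add]
    refine levelAvg_congr fun j _ => ?_
    simp only [haarSum_two_mul, haarSum_two_mul_add_one, map_add, map_sub, LinearMap.add_apply,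
      LinearMap.sub_apply]
    ring

lemma levelAvg_pairing_haarSum_const (B : E →ₗ[ℝ] E' →ₗ[ℝ] ℝ) (X : ℕ → ℕ → E) (m : E') (N : ℕ) :
    levelAvg N (fun c => B (haarSum X N c) m) = 0 := by
  induction N with
  | zero => simp [haarSum, levelAvg]
  | succ N ih =>
    rw [← ih, levelAvg_succ]
    refine levelAvg_congr fun j _ => ?_
    simp only [haarSum_two_mul, haarSum_two_mul_add_one, map_add, map_sub, LinearMap.add_apply,
      LinearMap.sub_apply]
    ring

/-- A pairing of norm at most `1` under which the unit ball of `E'` norms `E` up to the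
factor `2`. The factor is there because a functional need not attain its norm. -/
structure IsNormingPairing (B : E →ₗ[ℝ] E' →ₗ[ℝ] ℝ) : Prop where
  le_norm_mul_norm (x : E) (y : E') : B x y ≤ ‖x‖ * ‖y‖
  exists_half_norm_le (x : E) : ∃ y, ‖y‖ ≤ 1 ∧ ‖x‖ / 2 ≤ B x y

variable (E) in
lemma isNormingPairing_flip_topDualPairing :
    IsNormingPairing (LinearMap.flip (topDualPairing ℝ E)) where
  le_norm_mul_norm x y := by
    rw [mul_comm]
    exact (le_abs_self _).trans (y.le_opNorm x)
  exists_half_norm_le x := by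
    obtain ⟨y, hy, hx⟩ := exists_dual_vector'' ℝ x
    exact ⟨y, hy, (half_le_self (norm_nonneg x)).trans_eq hx.symm⟩

variable (E) in
lemma isNormingPairing_topDualPairing : IsNormingPairing (topDualPairing ℝ E) where
  le_norm_mul_norm y x := (le_abs_self _).trans (y.le_opNorm x)
  exists_half_norm_le y := by
    rcases (norm_nonneg y).eq_or_lt with h | h
    · exact ⟨0, by simp [← h]⟩
    obtain ⟨x, hx, hyx⟩ := y.exists_lt_apply_of_lt_opNorm (half_lt_self h)
    rcases abs_choice (y x) with habs | habs
    · exact ⟨x, hx.le, habs ▸ hyx.le⟩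
    · exact ⟨-x, by rw [norm_neg]; exact hx.le, by rw [map_neg]; exact habs ▸ hyx.le⟩

lemma IsNormingPairing.exists_norming_function {B : E →ₗ[ℝ] E' →ₗ[ℝ] ℝ} (hB : IsNormingPairing B)
    (hpq : p.HolderConjugate q) (N : ℕ) (f : ℕ → E) : ∃ g : ℕ → E',
      levelAvg N (fun c => ‖f c‖ ^ q) ≤ 2 * levelAvg N (fun c => B (f c) (g c)) ∧
      levelAvg N (fun c => ‖g c‖ ^ p) ≤ levelAvg N (fun c => ‖f c‖ ^ q) := by
  choose u hu hBu using hB.exists_half_norm_le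
  refine ⟨fun c => ‖f c‖ ^ (q - 1) • u (f c), ?_, levelAvg_mono fun c _ => ?_⟩
  · rw [← levelAvg_mul]
    refine levelAvg_mono fun c _ => ?_
    have split_power : ‖f c‖ ^ q = ‖f c‖ ^ (q - 1) * ‖f c‖ := by
      rw [← Real.rpow_add_one' (norm_nonneg _) (by simpa using hpq.symm.ne_zero), sub_add_cancel]
    rw [map_smul, smul_eq_mul, split_power]
    have := mul_le_mul_of_nonneg_left (hBu (f c)) (Real.rpow_nonneg (norm_nonneg (f c)) (q - 1))
    linarith
  · have norm_le : ‖‖f c‖ ^ (q - 1) • u (f c)‖ ≤ ‖f c‖ ^ (q - 1) := by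
      rw [norm_smul, Real.norm_of_nonneg (Real.rpow_nonneg (norm_nonneg _) _)]
      exact mul_le_of_le_one_right (Real.rpow_nonneg (norm_nonneg _) _) (hu _)
    refine (Real.rpow_le_rpow (norm_nonneg _) norm_le hpq.nonneg).trans_eq ?_
    rw [← Real.rpow_mul (norm_nonneg _), hpq.symm.sub_one_mul_conj]

theorem IsNormingPairing.haarMoment_le {B : E →ₗ[ℝ] E' →ₗ[ℝ] ℝ} (hB : IsNormingPairing B)
    (hpq : p.HolderConjugate q) {C : ℝ} (hC : 0 ≤ C) {N : ℕ} {X V : ℕ → ℕ → E}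
    (h : ∀ Y : ℕ → ℕ → E', ∃ Z : ℕ → ℕ → E', haarMoment p N Z ≤ C * haarMoment p N Y ∧
      ∑ n ∈ Finset.range N, levelAvg n (fun j => B (X n j) (Y n j)) =
        ∑ n ∈ Finset.range N, levelAvg n (fun j => B (V n j) (Z n j))) :
    haarMoment q N X ≤ (2 * (C * 2 ^ p) ^ (1 / p)) ^ q * haarMoment q N V := by
  have hp := hpq.pos
  have hq := hpq.symm.pos
  have hX := haarMoment_nonneg q N X
  have hV := haarMoment_nonneg q N V
  obtain ⟨g, hXg, hg⟩ := hB.exists_norming_function hpq N (haarSum X N)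
  obtain ⟨Y, m, hY, hm⟩ := exists_haarSum_add_const_eq N g
  obtain ⟨Z, hZY, hpair⟩ := h Y
  have transfer : levelAvg N (fun c => B (haarSum X N c) (g c)) =
      levelAvg N (fun c => B (haarSum V N c) (haarSum Z N c)) := by
    calc levelAvg N (fun c => B (haarSum X N c) (g c))
        = levelAvg N (fun c => B (haarSum X N c) (haarSum Y N c) + B (haarSum X N c) m) :=
          levelAvg_congr fun c hc => by rw [← map_add, hY c hc]
      _ = levelAvg N (fun c => B (haarSum X N c) (haarSum Y N c)) := by
          rw [levelAvg_add, levelAvg_pairing_haarSum_const, add_zero]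
      _ = _ := by rw [levelAvg_pairing_haarSum, hpair, ← levelAvg_pairing_haarSum]
  have hZ : haarMoment p N Z ≤ C * 2 ^ p * haarMoment q N X := by
    refine hZY.trans ?_
    rw [mul_assoc]
    refine mul_le_mul_of_nonneg_left ?_ hC
    exact (haarMoment_le_of_haarSum_add_const_eq hpq.lt.le hY (hm p hpq.lt.le)).trans
      (mul_le_mul_of_nonneg_left hg (by positivity))
  have self_bound : haarMoment q N X ≤
      2 * (C * 2 ^ p) ^ (1 / p) * haarMoment q N V ^ (1 / q) * haarMoment q N X ^ (1 - 1 / q) := by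
    calc haarMoment q N X ≤ 2 * levelAvg N (fun c => B (haarSum V N c) (haarSum Z N c)) := by
          rwa [← transfer]
      _ ≤ 2 * (haarMoment q N V ^ (1 / q) * haarMoment p N Z ^ (1 / p)) := by
          gcongr
          exact (levelAvg_mono fun c _ => hB.le_norm_mul_norm _ _).trans
            (levelAvg_mul_le_of_holderConjugate hpq.symm (fun c => norm_nonneg _)
              (fun c => norm_nonneg _))
      _ ≤ 2 * (haarMoment q N V ^ (1 / q) * (C * 2 ^ p * haarMoment q N X) ^ (1 / p)) := by
          have := haarMoment_nonneg p N Z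
          gcongr
      _ = _ := by
          rw [Real.mul_rpow (by positivity) hX, one_div q, hpq.symm.one_sub_inv, one_div p]
          ring
  simpa only [one_div_one_div] using
    le_rpow_one_div_mul_of_le_mul_rpow (by positivity) hX hV (by positivity) self_bound

end Duality

section AllExponents

variable {E E' : Type*} [NormedAddCommGroup E] [NormedSpace ℝ E] [NormedAddCommGroup E']
  [NormedSpace ℝ E'] {p q r : ℝ}

lemma HaarUnconditional.of_isNormingPairing {B : E →ₗ[ℝ] E' →ₗ[ℝ] ℝ} (hB : IsNormingPairing B)
    (hpq : p.HolderConjugate q) (h : HaarUnconditional E' p) : HaarUnconditional E q := by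
  obtain ⟨β, hβ, h⟩ := h
  have hp := hpq.pos
  refine ⟨(2 * (β * 2 ^ p) ^ (1 / p)) ^ q, by positivity, fun N X ε hε =>
    hB.haarMoment_le hpq hβ fun Y => ⟨fun n j => ε n j • Y n j, h N Y ε hε, ?_⟩⟩
  simp only [map_smul, LinearMap.smul_apply]

lemma HaarUnconditional.strongDual (hpq : p.HolderConjugate q) (h : HaarUnconditional E p) :
    HaarUnconditional (StrongDual ℝ E) q :=
  h.of_isNormingPairing (isNormingPairing_topDualPairing E) hpq

lemma HaarUnconditional.of_strongDual (hpq : p.HolderConjugate q)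
    (h : HaarUnconditional (StrongDual ℝ E) p) : HaarUnconditional E q :=
  h.of_isNormingPairing (isNormingPairing_flip_topDualPairing E) hpq

lemma lt_of_holderConjugate_of_lt {p' r' : ℝ} (hp : p.HolderConjugate p')
    (hr : r.HolderConjugate r') (h : p < r) : r' < p' := by
  rw [← inv_lt_inv₀ hp.symm.pos hr.symm.pos, ← hp.one_sub_inv, ← hr.one_sub_inv]
  exact sub_lt_sub_left (inv_strictAnti₀ hp.pos h) 1

theorem HaarUnconditional.of_one_lt (hp : 1 < p) (hr : 1 < r) (h : HaarUnconditional E p) :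
    HaarUnconditional E r := by
  rcases lt_trichotomy r p with hrp | rfl | hpr
  · exact h.of_lt hr hrp
  · exact h
  · have hp' := Real.HolderConjugate.conjExponent hp
    have hr' := Real.HolderConjugate.conjExponent hr
    exact .of_strongDual hr'.symm
      ((h.strongDual hp').of_lt hr'.symm.lt (lt_of_holderConjugate_of_lt hp' hr' hpr))

end AllExponents

/-! ### Coefficient families of finite Haar expansions -/

section TreeFamily

variable {ι V W : Type*} [AddCommMonoid V] [AddCommMonoid W] {α β : ι → DyadicI} {L : Finset ι}

/-- The coefficients, indexed by level and position in the dyadic tree, of the Haar expansion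
`∑ i ∈ L, x i • h_{α i}`. -/
def treeFamily (α : ι → DyadicI) (L : Finset ι) (x : ι → V) (n j : ℕ) : V :=
  ∑ i ∈ L, if (α i).n = n ∧ (α i).k = j then x i else 0

lemma dyadicI_ext {I J : DyadicI} (hn : I.n = J.n) (hk : I.k = J.k) : I = J := by
  cases I; cases J; simp_all

lemma treeFamily_node (hα : Function.Injective α) (x : ι → V) {i : ι} (hi : i ∈ L) :
    treeFamily α L x (α i).n (α i).k = x i := by
  rw [treeFamily, Finset.sum_eq_single_of_mem i hi, if_pos ⟨rfl, rfl⟩]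
  exact fun k _ hk => if_neg fun h => hk (hα (dyadicI_ext h.1 h.2))

lemma treeFamily_eq_zero (x : ι → V) {n j : ℕ} (h : ∀ i ∈ L, ¬((α i).n = n ∧ (α i).k = j)) :
    treeFamily α L x n j = 0 :=
  Finset.sum_eq_zero fun i hi => if_neg (h i hi)

lemma treeFamily_induction (hα : Function.Injective α) {x : ι → V} {P : ℕ → ℕ → V → Prop}
    (zero : ∀ n j, (∀ i ∈ L, ¬((α i).n = n ∧ (α i).k = j)) → P n j 0)
    (node : ∀ i ∈ L, P (α i).n (α i).k (x i)) (n j : ℕ) : P n j (treeFamily α L x n j) := by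
  by_cases h : ∃ i ∈ L, (α i).n = n ∧ (α i).k = j
  · obtain ⟨i, hi, rfl, rfl⟩ := h
    exact (treeFamily_node hα x hi).symm ▸ node i hi
  · have off : ∀ i ∈ L, ¬((α i).n = n ∧ (α i).k = j) := fun i hi hi' => h ⟨i, hi, hi'⟩
    exact (treeFamily_eq_zero x off).symm ▸ zero n j off

lemma apply_treeFamily (hα : Function.Injective α) (x : ι → V) (Θ : ℕ → ℕ → V → W)
    (h0 : ∀ n j, Θ n j 0 = 0) (n j : ℕ) :
    Θ n j (treeFamily α L x n j) = treeFamily α L (fun i => Θ (α i).n (α i).k (x i)) n j :=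
  treeFamily_induction hα (P := fun n j v =>
      Θ n j v = treeFamily α L (fun i => Θ (α i).n (α i).k (x i)) n j)
    (fun n j off => by rw [h0, treeFamily_eq_zero _ off])
    (fun i hi => (treeFamily_node hα (fun i => Θ (α i).n (α i).k (x i)) hi).symm) n j

lemma treeFamily_apply_node (hα : Function.Injective α) {y : ℕ → ℕ → V}
    (hy : ∀ n j, (∀ i ∈ L, ¬((α i).n = n ∧ (α i).k = j)) → y n j = 0) :
    treeFamily α L (fun i => y (α i).n (α i).k) = y := by
  funext n j
  exact treeFamily_induction hα (P := fun n j v => v = y n j) (fun n j off => (hy n j off).symm)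
    (fun _ _ => rfl) n j

lemma treeFamily_nonneg {d : ι → ℝ} (hd : ∀ i, 0 ≤ d i) (n j : ℕ) : 0 ≤ treeFamily α L d n j :=
  Finset.sum_nonneg fun i _ => ite_nonneg (hd i) le_rfl

lemma levelAvg_treeFamily (n : ℕ) (d : ι → ℝ) : levelAvg n (treeFamily α L d n) =
    ∑ i ∈ L, if (α i).n = n then d i * (α i).len else 0 := by
  refine (levelAvg_sum n L fun i j => if (α i).n = n ∧ (α i).k = j then d i else 0).trans
    (Finset.sum_congr rfl fun i _ => ?_)
  split_ifs with h
  · subst h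
    simp only [true_and, levelAvg_eq_sum_div, Finset.sum_ite_eq, Finset.mem_range, (α i).hk,
      if_true, len, zpow_neg, zpow_natCast, div_eq_mul_inv]
  · simp only [h, false_and, if_false, levelAvg_const]

lemma sum_levelAvg_apply_treeFamily (hα : Function.Injective α) {N : ℕ}
    (hLα : ∀ i ∈ L, (α i).n < N) (x : ι → V) (Θ : ℕ → ℕ → V → ℝ) (h0 : ∀ n j, Θ n j 0 = 0) :
    ∑ n ∈ Finset.range N, levelAvg n (fun j => Θ n j (treeFamily α L x n j)) =
      ∑ i ∈ L, Θ (α i).n (α i).k (x i) * (α i).len := by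
  simp only [apply_treeFamily hα x Θ h0]
  calc _ = ∑ n ∈ Finset.range N, ∑ i ∈ L,
        if (α i).n = n then Θ (α i).n (α i).k (x i) * (α i).len else 0 :=
      Finset.sum_congr rfl fun n _ => levelAvg_treeFamily n _
    _ = _ := by
      rw [Finset.sum_comm]
      refine Finset.sum_congr rfl fun i hi => ?_
      rw [Finset.sum_ite_eq, if_pos (Finset.mem_range.2 (hLα i hi))]

end TreeFamily

/-! ### Rearrangements -/

section Rearrangement

variable {ι : Type*} {α β : ι → DyadicI} {L : Finset ι} {E E' : Type*} [NormedAddCommGroup E]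
  [NormedSpace ℝ E] [NormedAddCommGroup E'] [NormedSpace ℝ E'] {p q : ℝ}

/-- The ratio `|α i| / |β i|`, whose `1/p`-th power is the weight that makes
`h_{α i} ↦ (|α i| / |β i|)^{1/p} h_{β i}` preserve the `L^p` norm of each single Haar function. -/
def lenRatio (α β : ι → DyadicI) (i : ι) : ℝ := (α i).len / (β i).len

lemma len_pos (I : DyadicI) : 0 < I.len := zpow_pos two_pos _

lemma lenRatio_pos (α β : ι → DyadicI) (i : ι) : 0 < lenRatio α β i :=
  div_pos (len_pos _) (len_pos _)

lemma lenRatio_mul_len (α β : ι → DyadicI) (i : ι) : lenRatio α β i * (β i).len = (α i).len :=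
  div_mul_cancel₀ _ (len_pos _).ne'

lemma lenRatio_rpow_mul_len (hpq : p.HolderConjugate q) (α β : ι → DyadicI) (i : ι) :
    lenRatio β α i ^ (1 / q) * (α i).len = lenRatio α β i ^ (1 / p) * (β i).len := by
  have hr := lenRatio_pos α β i
  rw [← lenRatio_mul_len α β, ← mul_assoc, lenRatio, ← inv_div, ← lenRatio, Real.inv_rpow hr.le,
    ← Real.rpow_neg hr.le, ← Real.rpow_add_one hr.ne', one_div, one_div, ← hpq.one_sub_inv,
    neg_add_eq_sub, sub_sub_cancel]

variable (E) in
/-- `L^p_E`-boundedness of the rearrangement `h_{α i} ↦ (|α i| / |β i|)^{1/p} h_{β i}` on finite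
Haar expansions; the level `N` only has to exceed the levels of all intervals involved. -/
def RearrangementBounded (α β : ι → DyadicI) (p : ℝ) : Prop :=
  ∃ C : ℝ, 0 ≤ C ∧ ∀ (N : ℕ) (L : Finset ι) (x : ι → E),
    (∀ i ∈ L, (α i).n < N) → (∀ i ∈ L, (β i).n < N) →
    haarMoment p N (treeFamily β L fun i => lenRatio α β i ^ (1 / p) • x i) ≤
      C * haarMoment p N (treeFamily α L x)

lemma HaarUnconditional.exists_restriction_bound (hp : 1 ≤ p) (h : HaarUnconditional E p) :
    ∃ K : ℝ, 0 ≤ K ∧ ∀ {α : ι → DyadicI}, Function.Injective α →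
      ∀ (N : ℕ) (L : Finset ι) (Y : ℕ → ℕ → E),
        haarMoment p N (treeFamily α L fun i => Y (α i).n (α i).k) ≤ K * haarMoment p N Y := by
  obtain ⟨K, hK, h⟩ := h.exists_multiplier_bound hp
  refine ⟨K, hK, fun {α} hα N L Y => ?_⟩
  have restrict : treeFamily α L (fun i => Y (α i).n (α i).k) =
      fun n j => treeFamily α L (fun _ => (1 : ℝ)) n j • Y n j := by
    funext n j
    rw [apply_treeFamily hα _ (fun n j (t : ℝ) => t • Y n j) fun _ _ => zero_smul _ _]
    simp only [one_smul]
  rw [restrict]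
  exact h N Y _ (treeFamily_induction hα (P := fun _ _ t => |t| ≤ 1)
    (fun _ _ _ => by simp) (fun _ _ => by simp))

lemma RearrangementBounded.of_isNormingPairing (hα : Function.Injective α)
    (hβ : Function.Injective β) (hpq : p.HolderConjugate q) {B : E →ₗ[ℝ] E' →ₗ[ℝ] ℝ}
    (hB : IsNormingPairing B) (hE' : HaarUnconditional E' p)
    (h : RearrangementBounded E' α β p) : RearrangementBounded E β α q := by
  obtain ⟨C, hC, h⟩ := h
  obtain ⟨K, hK, restrict⟩ := hE'.exists_restriction_bound (ι := ι) hpq.lt.le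
  have hp := hpq.pos
  refine ⟨(2 * (C * K * 2 ^ p) ^ (1 / p)) ^ q, by positivity, fun N L x hLβ hLα =>
    hB.haarMoment_le hpq (by positivity) fun Y =>
      ⟨treeFamily β L fun i => lenRatio α β i ^ (1 / p) • Y (α i).n (α i).k, ?_, ?_⟩⟩
  · refine (h N L _ hLα hLβ).trans ?_
    rw [mul_assoc]
    exact mul_le_mul_of_nonneg_left (restrict hα N L Y) hC
  · rw [sum_levelAvg_apply_treeFamily hα hLα _ (fun n j v => B v (Y n j)) (by simp),
      sum_levelAvg_apply_treeFamily hβ hLβ x (fun n j v => B v (treeFamily β L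
        (fun i => lenRatio α β i ^ (1 / p) • Y (α i).n (α i).k) n j)) (by simp)]
    refine Finset.sum_congr rfl fun i hi => ?_
    rw [treeFamily_node hβ _ hi, map_smul, map_smul, LinearMap.smul_apply, smul_eq_mul,
      smul_eq_mul, mul_right_comm, lenRatio_rpow_mul_len hpq]
    ring

theorem RearrangementBounded.of_strongDual (hα : Function.Injective α)
    (hβ : Function.Injective β) (hpq : p.HolderConjugate q)
    (hE : HaarUnconditional (StrongDual ℝ E) p)
    (h : RearrangementBounded (StrongDual ℝ E) α β p) : RearrangementBounded E β α q :=
  h.of_isNormingPairing hα hβ hpq (isNormingPairing_flip_topDualPairing E) hE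

end Rearrangement

/-! ### Testing on `ℓ^q` -/

section LittleLp

variable {ι : Type*} {α β : ι → DyadicI} {p q : ℝ}

lemma haarMoment_two_eq_sum (N : ℕ) (X : ℕ → ℕ → ℝ) :
    haarMoment 2 N X = ∑ n ∈ Finset.range N, levelAvg n (fun j => X n j * X n j) := by
  refine .trans (levelAvg_congr fun c _ => ?_) (levelAvg_pairing_haarSum (LinearMap.mul ℝ ℝ) X X N)
  rw [LinearMap.mul_apply', Real.norm_eq_abs, Real.rpow_two, sq_abs, sq]

lemma haarUnconditional_real_two : HaarUnconditional ℝ 2 := by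
  refine ⟨1, zero_le_one, fun N X ε hε => ?_⟩
  rw [one_mul, haarMoment_two_eq_sum, haarMoment_two_eq_sum]
  refine (Finset.sum_congr rfl fun n _ => levelAvg_congr fun j _ => ?_).le
  rw [smul_eq_mul]
  rcases hε n j with h | h <;> rw [h] <;> ring

lemma hasSum_haarMoment_lp (hq : 0 < q) [Fact (1 ≤ ENNReal.ofReal q)] (N : ℕ)
    (X : ℕ → ℕ → lp (fun _ : ι => ℝ) (ENNReal.ofReal q)) :
    HasSum (fun i => haarMoment q N fun n j => X n j i) (haarMoment q N X) := by
  simp only [haarMoment, levelAvg_eq_sum_div]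
  refine (hasSum_sum fun c _ => ?_).div_const _
  have coordinate : ∀ i, haarSum X N c i = haarSum (fun n j => X n j i) N c :=
    fun i => map_haarSum (lp.evalₗ (𝕜 := ℝ) (fun _ => ℝ) _ i) X N c
  have h := lp.hasSum_norm (p := ENNReal.ofReal q) (by rwa [ENNReal.toReal_ofReal hq.le])
    (haarSum X N c)
  simpa only [ENNReal.toReal_ofReal hq.le, coordinate] using h

lemma haarUnconditional_lp (hq : 1 < q) [Fact (1 ≤ ENNReal.ofReal q)] :
    HaarUnconditional (lp (fun _ : ι => ℝ) (ENNReal.ofReal q)) q := by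
  obtain ⟨C, hC, h⟩ := haarUnconditional_real_two.of_one_lt one_lt_two hq
  refine ⟨C, hC, fun N X ε hε => ?_⟩
  have hq0 : 0 < q := by linarith
  refine hasSum_le (fun i => ?_) (hasSum_haarMoment_lp hq0 N fun n j => ε n j • X n j)
    ((hasSum_haarMoment_lp hq0 N X).mul_left C)
  simpa only [lp.coeFn_smul, Pi.smul_apply] using h N (fun n j => X n j i) ε hε

/-- The value of the Haar function `h_I` on the `c`-th dyadic interval of level `N`; it is only
meaningful for `I.n < N`, and `0` otherwise. -/
def nodeHaar (I : DyadicI) (N c : ℕ) : ℝ :=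
  haarSum (fun n j => if I.n = n ∧ I.k = j then (1 : ℝ) else 0) N c

lemma nodeHaar_succ (I : DyadicI) (N c : ℕ) : nodeHaar I (N + 1) c =
    nodeHaar I N (c / 2) + (-1 : ℝ) ^ c * (if I.n = N ∧ I.k = c / 2 then 1 else 0) := rfl

lemma nodeHaar_eq_zero_of_le (I : DyadicI) {N : ℕ} (h : N ≤ I.n) (c : ℕ) :
    nodeHaar I N c = 0 := by
  induction N generalizing c with
  | zero => rfl
  | succ N ih =>
    rw [nodeHaar_succ, ih (Nat.le_of_succ_le h), if_neg (by lia), mul_zero, add_zero]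

lemma abs_nodeHaar_succ (I : DyadicI) (N c : ℕ) : |nodeHaar I (N + 1) c| =
    |nodeHaar I N (c / 2)| + (if I.n = N ∧ I.k = c / 2 then 1 else 0) := by
  rw [nodeHaar_succ]
  split_ifs with h
  · rw [nodeHaar_eq_zero_of_le I h.1.ge, abs_zero, zero_add, zero_add, mul_one, abs_neg_one_pow]
  · rw [mul_zero, add_zero, add_zero]

lemma abs_nodeHaar_eq_zero_or_one (I : DyadicI) (N c : ℕ) :
    |nodeHaar I N c| = 0 ∨ |nodeHaar I N c| = 1 := by
  induction N generalizing c with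
  | zero => exact .inl abs_zero
  | succ N ih =>
    rw [abs_nodeHaar_succ]
    split_ifs with h
    · right; rw [nodeHaar_eq_zero_of_le I h.1.ge, abs_zero, zero_add]
    · rw [add_zero]; exact ih (c / 2)

lemma haarSum_treeFamily {E : Type*} [NormedAddCommGroup E] [NormedSpace ℝ E] (α : ι → DyadicI)
    (L : Finset ι) (x : ι → E) (N c : ℕ) :
    haarSum (treeFamily α L x) N c = ∑ i ∈ L, nodeHaar (α i) N c • x i := by
  induction N generalizing c with
  | zero => simp [haarSum, nodeHaar]
  | succ N ih =>
    simp only [haarSum_succ, ih, treeFamily, Finset.smul_sum, ← Finset.sum_add_distrib,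
      nodeHaar_succ, add_smul, mul_smul, ite_smul, one_smul, zero_smul]

lemma pathSum_treeFamily (α : ι → DyadicI) (L : Finset ι) (d : ι → ℝ) (N c : ℕ) :
    pathSum (treeFamily α L d) N c = ∑ i ∈ L, |nodeHaar (α i) N c| * d i := by
  induction N generalizing c with
  | zero => simp [pathSum, nodeHaar, haarSum]
  | succ N ih =>
    simp only [pathSum, ih, treeFamily, ← Finset.sum_add_distrib, abs_nodeHaar_succ, add_mul,
      ite_mul, one_mul, zero_mul]

lemma norm_haarSum_lp_single_rpow (hq : 0 < q) [Fact (1 ≤ ENNReal.ofReal q)] (α : ι → DyadicI)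
    (L : Finset ι) {b : ι → ℝ} (hb : ∀ i, 0 ≤ b i) (N c : ℕ) :
    ‖haarSum (treeFamily α L fun i => b i ^ (1 / q) •
      (lp.single (ENNReal.ofReal q) i (1 : ℝ) : lp (fun _ : ι => ℝ) _)) N c‖ ^ q =
      pathSum (treeFamily α L b) N c := by
  have norm_sum := lp.norm_sum_single (p := ENNReal.ofReal q) (E := fun _ : ι => ℝ)
    (by rwa [ENNReal.toReal_ofReal hq.le]) (fun i => nodeHaar (α i) N c * b i ^ (1 / q)) L
  simp only [ENNReal.toReal_ofReal hq.le] at norm_sum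
  simp only [haarSum_treeFamily, pathSum_treeFamily, smul_smul, ← lp.single_smul]
  simp only [smul_eq_mul, mul_one]
  rw [norm_sum]
  refine Finset.sum_congr rfl fun i _ => ?_
  rw [Real.norm_eq_abs, abs_mul, abs_of_nonneg (Real.rpow_nonneg (hb i) _),
    Real.mul_rpow (abs_nonneg _) (Real.rpow_nonneg (hb i) _), one_div,
    Real.rpow_inv_rpow (hb i) hq.ne']
  rcases abs_nodeHaar_eq_zero_or_one (α i) N c with h | h <;> rw [h]
  · rw [Real.zero_rpow hq.ne']
  · rw [Real.one_rpow]

/-- The analogue of `RearrangementBounded` at exponent `r` for positive coefficients, with the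
signed Haar sums replaced by unsigned sums along the paths. -/
def PathSumBound (α β : ι → DyadicI) (r : ℝ) : Prop :=
  ∃ C : ℝ, 0 ≤ C ∧ ∀ (N : ℕ) (L : Finset ι) (b : ι → ℝ), (∀ i, 0 ≤ b i) →
    (∀ i ∈ L, (α i).n < N) → (∀ i ∈ L, (β i).n < N) →
    levelAvg N (fun c =>
      pathSum (treeFamily β L fun i => b i * lenRatio α β i ^ (1 / r)) N c ^ r) ≤
        C * levelAvg N (fun c => pathSum (treeFamily α L b) N c ^ r)

/-- Spreading the coefficients over the unit vectors of `ℓ^q` removes all cancellation: the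
`q`-th power of the norm of the Haar sum becomes an unsigned sum. -/
theorem RearrangementBounded.pathSumBound (hq : 0 < q) [Fact (1 ≤ ENNReal.ofReal q)]
    (h : RearrangementBounded (lp (fun _ : ι => ℝ) (ENNReal.ofReal q)) α β p) :
    PathSumBound α β (p / q) := by
  obtain ⟨C, hC, h⟩ := h
  refine ⟨C, hC, fun N L b hb hLα hLβ => ?_⟩
  have lp_bound := h N L (fun i => b i ^ (1 / q) • lp.single (ENNReal.ofReal q) i (1 : ℝ)) hLα hLβ
  have weights : ∀ i, lenRatio α β i ^ (1 / p) * b i ^ (1 / q) =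
      (b i * lenRatio α β i ^ (1 / (p / q))) ^ (1 / q) := fun i => by
    have hr := (lenRatio_pos α β i).le
    rw [Real.mul_rpow (hb i) (Real.rpow_nonneg hr _), ← Real.rpow_mul hr, mul_comm, one_div_div,
      div_mul_div_cancel₀' hq.ne', mul_comm]
  have rpow_split : ∀ t : ℝ, 0 ≤ t → t ^ p = (t ^ q) ^ (p / q) := fun t ht => by
    rw [← Real.rpow_mul ht, mul_div_cancel₀ _ hq.ne']
  simpa only [haarMoment, smul_smul, weights, rpow_split _ (norm_nonneg _),
    norm_haarSum_lp_single_rpow hq α L hb, norm_haarSum_lp_single_rpow hq β L fun i =>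
      mul_nonneg (hb i) (Real.rpow_nonneg (lenRatio_pos α β i).le _)] using lp_bound

end LittleLp

/-! ### The maximal estimate -/

section Maximal

variable {r r' : ℝ}

lemma levelAvg_pathMax_succ (v : ℕ → ℕ → ℝ) (N : ℕ) :
    levelAvg (N + 1) (pathMax v (N + 1)) = levelAvg N (runMax v N) :=
  levelAvg_div_two N (runMax v N)

lemma levelAvg_pathMax_eq_sum (v : ℕ → ℕ → ℝ) (N : ℕ) : levelAvg N (pathMax v N) =
    ∑ n ∈ Finset.range N, levelAvg n (fun j => runMax v n j - pathMax v n j) := by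
  induction N with
  | zero => exact levelAvg_const 0 0
  | succ N ih =>
    rw [Finset.sum_range_succ, ← ih, levelAvg_sub, levelAvg_pathMax_succ]
    exact (add_sub_cancel _ _).symm

lemma sum_levelAvg_mul_le_levelAvg_pathSum_mul_pathMax {d : ℕ → ℕ → ℝ} (hd : ∀ n j, 0 ≤ d n j)
    (g : ℕ → ℕ → ℝ) (N : ℕ) :
    ∑ n ∈ Finset.range N, levelAvg n (fun j => d n j * g n j) ≤
      levelAvg N (fun c => pathSum d N c * pathMax g N c) := by
  induction N with
  | zero => simp [pathSum, levelAvg_const]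
  | succ N ih =>
    have next_level : levelAvg (N + 1) (fun c => pathSum d (N + 1) c * pathMax g (N + 1) c) =
        levelAvg N (fun j => (pathSum d N j + d N j) * runMax g N j) :=
      levelAvg_div_two N fun j => (pathSum d N j + d N j) * runMax g N j
    rw [Finset.sum_range_succ, next_level]
    refine (add_le_add_left ih _).trans ?_
    rw [← levelAvg_add]
    refine levelAvg_mono fun j _ => ?_
    rw [add_mul]
    exact add_le_add (mul_le_mul_of_nonneg_left (le_max_left _ _) (pathSum_nonneg hd N j))
      (mul_le_mul_of_nonneg_left (le_runMax g N j) (hd N j))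

/-- The increment of the `s`-th power of the maximum of `v` along a path caused by the value of
`v` at node `j` of level `n`. -/
def maxIncr (s : ℝ) (v : ℕ → ℕ → ℝ) (n j : ℕ) : ℝ := runMax v n j ^ s - pathMax v n j ^ s

lemma maxIncr_nonneg {s : ℝ} (hs : 0 ≤ s) (v : ℕ → ℕ → ℝ) (n j : ℕ) : 0 ≤ maxIncr s v n j :=
  sub_nonneg.2 (Real.rpow_le_rpow (pathMax_nonneg v n j) (le_max_left _ _) hs)

lemma maxIncr_eq_zero {s : ℝ} {n j : ℕ} (h : v n j = 0) : maxIncr s v n j = 0 := by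
  rw [maxIncr, runMax, h, max_eq_left (pathMax_nonneg v n j), sub_self]

lemma pathSum_maxIncr {s : ℝ} (hs : s ≠ 0) (v : ℕ → ℕ → ℝ) (n c : ℕ) :
    pathSum (maxIncr s v) n c = pathMax v n c ^ s := by
  induction n generalizing c with
  | zero => exact (Real.zero_rpow hs).symm
  | succ n ih =>
    rw [pathSum, ih, maxIncr, add_sub_cancel]
    rfl

lemma sub_le_mul_rpow_sub_rpow_mul (hr : r.HolderConjugate r') {x y : ℝ} (hx : 0 ≤ x)
    (hxy : x ≤ y) : y - x ≤ r * ((y ^ (1 / r) - x ^ (1 / r)) * y ^ (1 / r')) := by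
  have h := rpow_sub_rpow_le hr.symm.lt (Real.rpow_nonneg hx (1 / r'))
    (Real.rpow_le_rpow hx hxy hr.symm.one_div_nonneg)
  have exponent : 1 / r' * (r' - 1) = 1 / r := by
    rw [mul_sub, one_div_mul_cancel hr.symm.ne_zero, mul_one, one_div, one_div,
      hr.symm.one_sub_inv]
  rwa [← hr.symm.conjugate_eq, one_div r', Real.rpow_inv_rpow (hx.trans hxy) hr.symm.ne_zero,
    Real.rpow_inv_rpow hx hr.symm.ne_zero, ← one_div, ← Real.rpow_mul (hx.trans hxy),
    ← Real.rpow_mul hx, exponent] at h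

lemma runMax_sub_pathMax_le (hr : r.HolderConjugate r') (v : ℕ → ℕ → ℝ) (n j : ℕ) :
    runMax v n j - pathMax v n j ≤ r * (maxIncr (1 / r) v n j * v n j ^ (1 / r')) := by
  rcases le_total (v n j) (pathMax v n j) with h | h
  · rw [maxIncr, runMax, max_eq_left h, sub_self, sub_self, zero_mul, mul_zero]
  · rw [maxIncr, runMax, max_eq_right h]
    exact sub_le_mul_rpow_sub_rpow_mul hr (pathMax_nonneg v n j) h

lemma levelAvg_pathMax_le_mul_sum (hr : r.HolderConjugate r') (v : ℕ → ℕ → ℝ) (N : ℕ) :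
    levelAvg N (pathMax v N) ≤ r * ∑ n ∈ Finset.range N,
      levelAvg n (fun j => maxIncr (1 / r) v n j * v n j ^ (1 / r')) := by
  rw [levelAvg_pathMax_eq_sum, Finset.mul_sum]
  refine Finset.sum_le_sum fun n _ => ?_
  rw [← levelAvg_mul]
  exact levelAvg_mono fun j _ => runMax_sub_pathMax_le hr v n j

end Maximal

section MaximalBound

variable {ι : Type*} {r r' : ℝ} {α β : ι → DyadicI}

/-- The maximal estimate `∫ max_i a_i (|α i| / |β i|) 1_{β i} ≤ C ∫ max_i a_i 1_{α i}`, a weighted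
form of the condition that the constant `C₁` of the rearrangement is finite. -/
def MaximalBound (α β : ι → DyadicI) : Prop :=
  ∃ C : ℝ, 0 ≤ C ∧ ∀ (N : ℕ) (L : Finset ι) (a : ι → ℝ), (∀ i, 0 ≤ a i) →
    (∀ i ∈ L, (α i).n < N) → (∀ i ∈ L, (β i).n < N) →
    levelAvg N (pathMax (treeFamily β L fun i => a i * lenRatio α β i) N) ≤
      C * levelAvg N (pathMax (treeFamily α L a) N)

lemma sum_levelAvg_mul_treeFamily_rpow (hα : Function.Injective α) (hβ : Function.Injective β)
    (hr : r.HolderConjugate r') {N : ℕ} {L : Finset ι} (hLα : ∀ i ∈ L, (α i).n < N)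
    (hLβ : ∀ i ∈ L, (β i).n < N) {a : ι → ℝ} (ha : ∀ i, 0 ≤ a i) (b : ℕ → ℕ → ℝ) :
    ∑ n ∈ Finset.range N, levelAvg n (fun j =>
        b n j * treeFamily α L (fun i => a i * lenRatio β α i) n j ^ (1 / r')) =
      ∑ n ∈ Finset.range N, levelAvg n (fun j =>
        treeFamily β L (fun i => b (α i).n (α i).k * lenRatio α β i ^ (1 / r)) n j *
          treeFamily β L a n j ^ (1 / r')) := by
  have hr' : (0 : ℝ) ^ (1 / r') = 0 := Real.zero_rpow hr.symm.one_div_ne_zero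
  rw [sum_levelAvg_apply_treeFamily hα hLα _ (fun n j t => b n j * t ^ (1 / r'))
      (fun _ _ => by rw [hr', mul_zero]),
    sum_levelAvg_apply_treeFamily hβ hLβ a (fun n j t => treeFamily β L
      (fun i => b (α i).n (α i).k * lenRatio α β i ^ (1 / r)) n j * t ^ (1 / r'))
      (fun _ _ => by rw [hr', mul_zero])]
  refine Finset.sum_congr rfl fun i hi => ?_
  rw [treeFamily_node hβ _ hi, Real.mul_rpow (ha i) (lenRatio_pos β α i).le, mul_assoc, mul_assoc,
    lenRatio_rpow_mul_len hr]
  ring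

lemma levelAvg_pathMax_treeFamily_le (hα : Function.Injective α) (hβ : Function.Injective β)
    (hr : r.HolderConjugate r') {N : ℕ} {L : Finset ι} (hLα : ∀ i ∈ L, (α i).n < N)
    (hLβ : ∀ i ∈ L, (β i).n < N) {a : ι → ℝ} (ha : ∀ i, 0 ≤ a i) {v : ℕ → ℕ → ℝ}
    (hv : treeFamily α L (fun i => a i * lenRatio β α i) = v) :
    levelAvg N (pathMax v N) ≤ r *
      (levelAvg N (fun c => pathSum (treeFamily β L fun i =>
        maxIncr (1 / r) v (α i).n (α i).k * lenRatio α β i ^ (1 / r)) N c ^ r) ^ (1 / r) *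
      levelAvg N (pathMax (treeFamily β L a) N) ^ (1 / r')) := by
  set d := treeFamily β L fun i =>
    maxIncr (1 / r) v (α i).n (α i).k * lenRatio α β i ^ (1 / r)
  have hr0 := hr.pos
  have hd : ∀ n j, 0 ≤ d n j := treeFamily_nonneg fun i => mul_nonneg
    (maxIncr_nonneg hr.one_div_nonneg _ _ _) (Real.rpow_nonneg (lenRatio_pos _ _ _).le _)
  have pathMax_rpow_rpow : ∀ c, pathMax (fun n j => treeFamily β L a n j ^ (1 / r')) N c ^ r' =
      pathMax (treeFamily β L a) N c := fun c => by
    rw [pathMax_rpow (treeFamily_nonneg ha) hr.symm.one_div_pos, one_div,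
      Real.rpow_inv_rpow (pathMax_nonneg _ _ _) hr.symm.ne_zero]
  refine (levelAvg_pathMax_le_mul_sum hr v N).trans ?_
  rw [← hv, sum_levelAvg_mul_treeFamily_rpow hα hβ hr hLα hLβ ha, hv]
  have hölder := levelAvg_mul_le_of_holderConjugate (N := N) hr (pathSum_nonneg hd N)
    (pathMax_nonneg (fun n j => treeFamily β L a n j ^ (1 / r')) N)
  simp only [pathMax_rpow_rpow] at hölder
  gcongr
  exact (sum_levelAvg_mul_le_levelAvg_pathSum_mul_pathMax hd _ N).trans hölder

/-- Abel summation writes the maximal function of `v` through the increments of its `r`-th root;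
testing on these increments bounds the maximal function by a power `< 1` of itself. -/
theorem PathSumBound.maximalBound (hα : Function.Injective α) (hβ : Function.Injective β)
    (hr : 1 < r) (h : PathSumBound α β r) : MaximalBound β α := by
  obtain ⟨C, hC, h⟩ := h
  have hrr := Real.HolderConjugate.conjExponent hr
  set r' := r.conjExponent
  have hr0 := hrr.pos
  refine ⟨(r * C ^ (1 / r)) ^ r', by positivity, fun N L a ha hLβ hLα => ?_⟩
  set v := treeFamily α L (fun i => a i * lenRatio β α i) with hv
  have hb : ∀ n j, 0 ≤ maxIncr (1 / r) v n j := maxIncr_nonneg hrr.one_div_nonneg v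
  have hv_avg : 0 ≤ levelAvg N (pathMax v N) := levelAvg_nonneg (pathMax_nonneg v N)
  have ha_avg : 0 ≤ levelAvg N (pathMax (treeFamily β L a) N) :=
    levelAvg_nonneg (pathMax_nonneg _ N)
  have telescope : ∀ c, pathSum (treeFamily α L fun i =>
      maxIncr (1 / r) v (α i).n (α i).k) N c ^ r = pathMax v N c := fun c => by
    rw [treeFamily_apply_node hα fun n j off => maxIncr_eq_zero (treeFamily_eq_zero _ off),
      pathSum_maxIncr hrr.one_div_ne_zero, one_div,
      Real.rpow_inv_rpow (pathMax_nonneg _ _ _) hrr.ne_zero]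
  have increments_bound := h N L _ (fun i => hb (α i).n (α i).k) hLα hLβ
  simp only [telescope] at increments_bound
  have self_bound : levelAvg N (pathMax v N) ≤ r * C ^ (1 / r) *
      levelAvg N (pathMax (treeFamily β L a) N) ^ (1 / r') *
        levelAvg N (pathMax v N) ^ (1 - 1 / r') := by
    refine (levelAvg_pathMax_treeFamily_le hα hβ hrr hLα hLβ ha hv.symm).trans ?_
    calc _ ≤ r * ((C * levelAvg N (pathMax v N)) ^ (1 / r) *
            levelAvg N (pathMax (treeFamily β L a) N) ^ (1 / r')) := by
          have := levelAvg_nonneg (N := N) fun c => Real.rpow_nonneg (pathSum_nonneg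
            (treeFamily_nonneg (L := L) (α := β) fun i => mul_nonneg (hb (α i).n (α i).k)
              (Real.rpow_nonneg (lenRatio_pos α β i).le (1 / r))) N c) r
          gcongr
      _ = _ := by
          rw [Real.mul_rpow hC hv_avg, one_div r', hrr.symm.one_sub_inv, one_div r]
          ring
  simpa only [one_div_one_div] using le_rpow_one_div_mul_of_le_mul_rpow hrr.symm.one_div_pos
    hv_avg ha_avg (by positivity) self_bound

end MaximalBound

/-! ### Downward extrapolation -/

section Extrapolation

variable {ι : Type*} {α β : ι → DyadicI} {E : Type*} [NormedAddCommGroup E] [NormedSpace ℝ E]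
  {p q : ℝ}

lemma treeFamily_lenRatio_smul_eq (hβ : Function.Injective β) {L : Finset ι} {x : ι → E}
    {a : ι → ℝ} {y : ι → E} (ha : ∀ i, 0 ≤ a i)
    (hx : ∀ i ∈ L, a i ^ (1 / q - 1 / p) • y i = x i) :
    treeFamily β L (fun i => lenRatio α β i ^ (1 / q) • x i) = fun n j =>
      treeFamily β L (fun i => a i * lenRatio α β i) n j ^ (1 / q - 1 / p) •
        treeFamily β L (fun i => lenRatio α β i ^ (1 / p) • y i) n j := by
  funext n j
  refine treeFamily_induction hβ (P := fun n j z => z =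
    treeFamily β L (fun i => a i * lenRatio α β i) n j ^ (1 / q - 1 / p) •
      treeFamily β L (fun i => lenRatio α β i ^ (1 / p) • y i) n j) (fun n j off => ?_)
    (fun i hi => ?_) n j
  · rw [treeFamily_eq_zero (fun i => lenRatio α β i ^ (1 / p) • y i) off, smul_zero]
  · have hr := lenRatio_pos α β i
    rw [treeFamily_node hβ _ hi, treeFamily_node hβ _ hi, ← hx i hi, smul_smul, smul_smul,
      Real.mul_rpow (ha i) hr.le, mul_assoc, ← Real.rpow_add hr, sub_add_cancel, mul_comm]

theorem RearrangementBounded.of_lt (hα : Function.Injective α) (hβ : Function.Injective β)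
    (hq : 1 < q) (hqp : q < p) (hE : HaarUnconditional E p) (hM : MaximalBound α β)
    (h : RearrangementBounded E α β p) : RearrangementBounded E α β q := by
  obtain ⟨K₁, hK₁, factorization⟩ := exists_haarMoment_factorization (E := E) hq hqp
  obtain ⟨K₂, hK₂, recombine⟩ := hE.haarMoment_rpow_smul_le hq hqp
  obtain ⟨K₃, hK₃, restrict⟩ := hE.exists_restriction_bound (ι := ι) (hq.trans hqp).le
  obtain ⟨C, hC, h⟩ := h
  obtain ⟨W, hW, hM⟩ := hM
  refine ⟨K₂ * ((W + C * K₃) * K₁), by positivity, fun N L x hLα hLβ => ?_⟩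
  obtain ⟨a, Y, ha, haY, ha_avg, hY⟩ := factorization N (treeFamily α L x)
  have hx := haarMoment_nonneg q N (treeFamily α L x)
  have max_bound : levelAvg N (pathMax (treeFamily β L fun i =>
      a (α i).n (α i).k * lenRatio α β i) N) ≤
        (W + C * K₃) * K₁ * haarMoment q N (treeFamily α L x) := by
    have restrict_le : ∀ n j, treeFamily α L (fun i => a (α i).n (α i).k) n j ≤ a n j :=
      treeFamily_induction hα (P := fun n j t => t ≤ a n j) (fun n j _ => ha n j)
        (fun _ _ => le_rfl)
    calc _ ≤ W * levelAvg N (pathMax (treeFamily α L fun i => a (α i).n (α i).k) N) :=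
          hM N L _ (fun i => ha _ _) hLα hLβ
      _ ≤ W * (K₁ * haarMoment q N (treeFamily α L x)) := by
          gcongr
          exact (levelAvg_mono fun c _ => pathMax_mono restrict_le N c).trans ha_avg
      _ ≤ _ := by
          rw [mul_assoc]
          gcongr
          exact le_add_of_nonneg_right (by positivity)
  have moment_bound : haarMoment p N (treeFamily β L fun i =>
      lenRatio α β i ^ (1 / p) • Y (α i).n (α i).k) ≤
        (W + C * K₃) * K₁ * haarMoment q N (treeFamily α L x) := by
    calc _ ≤ C * haarMoment p N (treeFamily α L fun i => Y (α i).n (α i).k) := h N L _ hLα hLβ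
      _ ≤ C * (K₃ * (K₁ * haarMoment q N (treeFamily α L x))) := by
          gcongr
          exact (restrict hα N L Y).trans (mul_le_mul_of_nonneg_left hY hK₃)
      _ ≤ _ := by
          rw [mul_assoc _ K₁, ← mul_assoc C]
          gcongr
          exact le_add_of_nonneg_left hW
  rw [treeFamily_lenRatio_smul_eq (p := p) hβ (fun i => ha (α i).n (α i).k) fun i hi =>
    (haY _ _).trans (treeFamily_node hα x hi), mul_assoc K₂]
  exact recombine N _ _ _ (treeFamily_nonneg fun i => mul_nonneg (ha _ _) (lenRatio_pos α β i).le)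
    max_bound moment_bound

end Extrapolation

/-! ### The square function estimate -/

section SquareFunction

variable {ι : Type*} {α β : ι → DyadicI} {L : Finset ι} {D : ℕ → ℕ → ℝ}

lemma levelAvg_pathSum_eq_sum (D : ℕ → ℕ → ℝ) (N : ℕ) :
    levelAvg N (pathSum D N) = ∑ n ∈ Finset.range N, levelAvg n (D n) := by
  induction N with
  | zero => exact levelAvg_const 0 0
  | succ N ih =>
    rw [Finset.sum_range_succ, ← ih, ← levelAvg_add]
    exact levelAvg_div_two N fun j => pathSum D N j + D N j

lemma pathSum_mul_le {f g : ℕ → ℕ → ℝ} (hg : ∀ n j, 0 ≤ g n j) (N c : ℕ) :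
    pathSum (fun n j => f n j * g n j) N c ≤ pathMax f N c * pathSum g N c := by
  induction N generalizing c with
  | zero => exact (mul_zero _).ge
  | succ N ih =>
    calc pathSum (fun n j => f n j * g n j) N (c / 2) + f N (c / 2) * g N (c / 2)
        ≤ runMax f N (c / 2) * pathSum g N (c / 2) + runMax f N (c / 2) * g N (c / 2) :=
          add_le_add ((ih _).trans
              (mul_le_mul_of_nonneg_right (le_max_left _ _) (pathSum_nonneg hg N _)))
            (mul_le_mul_of_nonneg_right (le_runMax f N _) (hg N _))
      _ = _ := (mul_add _ _ _).symm

/-- The square root of the sum of `D` along the path down to node `j` of level `n`, this node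
included. -/
def sqrtPathSum (D : ℕ → ℕ → ℝ) (n j : ℕ) : ℝ := √(pathSum D n j + D n j)

lemma pathMax_sqrtPathSum_le (hD : ∀ n j, 0 ≤ D n j) (N c : ℕ) :
    pathMax (sqrtPathSum D) N c ≤ √(pathSum D N c) := by
  induction N generalizing c with
  | zero => exact Real.sqrt_nonneg _
  | succ N ih =>
    exact max_le ((ih _).trans (Real.sqrt_le_sqrt (le_add_of_nonneg_right (hD _ _)))) le_rfl

lemma div_sqrt_add_le {x y : ℝ} (hx : 0 ≤ x) (hy : 0 ≤ y) :
    y / √(x + y) ≤ 2 * (√(x + y) - √x) := by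
  have sqrt_le : √x ≤ √(x + y) := Real.sqrt_le_sqrt (le_add_of_nonneg_right hy)
  rcases (Real.sqrt_nonneg (x + y)).eq_or_lt with h | h
  · rw [← h] at sqrt_le ⊢
    rw [div_zero]
    linarith
  · rw [div_le_iff₀ h]
    nlinarith [Real.sq_sqrt hx, Real.sq_sqrt (add_nonneg hx hy)]

lemma pathSum_div_sqrtPathSum_le (hD : ∀ n j, 0 ≤ D n j) (N c : ℕ) :
    pathSum (fun n j => D n j / sqrtPathSum D n j) N c ≤ 2 * √(pathSum D N c) := by
  induction N generalizing c with
  | zero => exact mul_nonneg zero_le_two (Real.sqrt_nonneg _)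
  | succ N ih =>
    have := div_sqrt_add_le (pathSum_nonneg hD N (c / 2)) (hD N (c / 2))
    have := ih (c / 2)
    simp only [pathSum, sqrtPathSum] at *
    linarith

lemma sqrtPathSum_mul_div_cancel (hD : ∀ n j, 0 ≤ D n j) (n j : ℕ) :
    sqrtPathSum D n j * (D n j / sqrtPathSum D n j) = D n j := by
  refine mul_div_cancel_of_imp' fun h => ?_
  have hp := pathSum_nonneg hD n j
  rw [sqrtPathSum, Real.sqrt_eq_zero (add_nonneg hp (hD n j))] at h
  linarith [hD n j]

lemma levelAvg_pathSum_treeFamily_lenRatio {N : ℕ} (hα : Function.Injective α)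
    (hβ : Function.Injective β) (hLα : ∀ i ∈ L, (α i).n < N) (hLβ : ∀ i ∈ L, (β i).n < N)
    (e : ι → ℝ) :
    levelAvg N (pathSum (treeFamily β L fun i => lenRatio α β i * e i) N) =
      levelAvg N (pathSum (treeFamily α L e) N) := by
  rw [levelAvg_pathSum_eq_sum, levelAvg_pathSum_eq_sum,
    sum_levelAvg_apply_treeFamily hβ hLβ _ (fun _ _ t => t) fun _ _ => rfl,
    sum_levelAvg_apply_treeFamily hα hLα _ (fun _ _ t => t) fun _ _ => rfl]
  refine Finset.sum_congr rfl fun i _ => ?_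
  rw [mul_right_comm, lenRatio_mul_len, mul_comm]

lemma treeFamily_lenRatio_sq_mul_eq (hβ : Function.Injective β) {d r : ι → ℝ}
    (h : ∀ i ∈ L, r i * (d i / r i) = d i) :
    treeFamily β L (fun i => lenRatio α β i ^ 2 * d i) = fun n j =>
      treeFamily β L (fun i => r i * lenRatio α β i) n j *
        treeFamily β L (fun i => lenRatio α β i * (d i / r i)) n j := by
  funext n j
  refine treeFamily_induction hβ (P := fun n j t => t =
    treeFamily β L (fun i => r i * lenRatio α β i) n j *
      treeFamily β L (fun i => lenRatio α β i * (d i / r i)) n j) (fun n j off => ?_)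
    (fun i hi => ?_) n j
  · rw [treeFamily_eq_zero _ off, zero_mul]
  · rw [treeFamily_node hβ _ hi, treeFamily_node hβ _ hi]
    nth_rw 1 [← h i hi]
    ring

lemma levelAvg_sqrt_pathSum_mul_le {f g : ℕ → ℕ → ℝ} (hg : ∀ n j, 0 ≤ g n j) (N : ℕ) :
    levelAvg N (fun c => √(pathSum (fun n j => f n j * g n j) N c)) ≤
      √(levelAvg N (pathMax f N)) * √(levelAvg N (pathSum g N)) := by
  refine le_trans (levelAvg_mono fun c _ => ?_) ((levelAvg_rpow_mul_rpow_le (N := N) one_half_pos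
    one_half_pos (add_halves 1) (pathMax_nonneg f N) (pathSum_nonneg hg N)).trans_eq ?_)
  · rw [← Real.sqrt_eq_rpow, ← Real.sqrt_eq_rpow, ← Real.sqrt_mul (pathMax_nonneg _ _ _)]
    exact Real.sqrt_le_sqrt (pathSum_mul_le hg N c)
  · rw [← Real.sqrt_eq_rpow, ← Real.sqrt_eq_rpow]

/-- The squared coefficients `d` are split as `r * (d / r)` with `r` the partial square function:
the first factor is moved by the maximal estimate, the second preserves the integral. -/
theorem MaximalBound.exists_sqrt_pathSum_le (hα : Function.Injective α)
    (hβ : Function.Injective β) (h : MaximalBound α β) : ∃ C : ℝ, 0 ≤ C ∧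
      ∀ (N : ℕ) (L : Finset ι) (d : ι → ℝ), (∀ i, 0 ≤ d i) →
        (∀ i ∈ L, (α i).n < N) → (∀ i ∈ L, (β i).n < N) →
        levelAvg N (fun c => √(pathSum (treeFamily β L fun i => lenRatio α β i ^ 2 * d i) N c)) ≤
          C * levelAvg N (fun c => √(pathSum (treeFamily α L d) N c)) := by
  obtain ⟨W, hW, h⟩ := h
  refine ⟨√(W * 2), Real.sqrt_nonneg _, fun N L d hd hLα hLβ => ?_⟩
  set D := treeFamily α L d
  have hD : ∀ n j, 0 ≤ D n j := treeFamily_nonneg hd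
  set r : ι → ℝ := fun i => sqrtPathSum D (α i).n (α i).k
  have hr : ∀ i, 0 ≤ r i := fun i => Real.sqrt_nonneg _
  set f := treeFamily β L fun i => r i * lenRatio α β i
  set g := treeFamily β L fun i => lenRatio α β i * (d i / r i)
  have hg : ∀ n j, 0 ≤ g n j := treeFamily_nonneg fun i =>
    mul_nonneg (lenRatio_pos α β i).le (div_nonneg (hd i) (hr i))
  set S := levelAvg N (fun c => √(pathSum D N c))
  have hS : 0 ≤ S := levelAvg_nonneg fun c => Real.sqrt_nonneg _
  have cancel : ∀ i ∈ L, r i * (d i / r i) = d i := fun i hi => by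
    have := sqrtPathSum_mul_div_cancel hD (α i).n (α i).k
    rwa [show D (α i).n (α i).k = d i from treeFamily_node hα d hi] at this
  have max_bound : levelAvg N (pathMax f N) ≤ W * S := by
    refine (h N L r hr hLα hLβ).trans (mul_le_mul_of_nonneg_left (levelAvg_mono fun c _ => ?_) hW)
    refine (pathMax_mono ?_ N c).trans (pathMax_sqrtPathSum_le hD N c)
    exact treeFamily_induction hα (P := fun n j t => t ≤ sqrtPathSum D n j)
      (fun _ _ _ => Real.sqrt_nonneg _) fun _ _ => le_rfl
  have sum_bound : levelAvg N (pathSum g N) ≤ 2 * S := by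
    have quotient : treeFamily α L (fun i => d i / r i) =
        fun n j => D n j / sqrtPathSum D n j := by
      funext n j
      exact (apply_treeFamily hα d (fun n j t => t / sqrtPathSum D n j)
        (fun _ _ => zero_div _) n j).symm
    rw [levelAvg_pathSum_treeFamily_lenRatio hα hβ hLα hLβ, quotient, ← levelAvg_mul]
    exact levelAvg_mono fun c _ => pathSum_div_sqrtPathSum_le hD N c
  calc _ ≤ √(levelAvg N (pathMax f N)) * √(levelAvg N (pathSum g N)) := by
        rw [treeFamily_lenRatio_sq_mul_eq hβ cancel]
        exact levelAvg_sqrt_pathSum_mul_le hg N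
    _ ≤ √(W * S) * √(2 * S) := by gcongr
    _ = √(W * 2) * S := by
        rw [← Real.sqrt_mul (mul_nonneg hW hS), mul_mul_mul_comm,
          Real.sqrt_mul (mul_nonneg hW zero_le_two), Real.sqrt_mul_self hS]

end SquareFunction

/-! ### Rearrangements bounded on all spaces with unconditional Haar expansions -/

section Universal

variable {ι : Type} {α β : ι → DyadicI} {p q : ℝ}

/-- Boundedness of the rearrangement at exponent `p` for every complete space in which Haar
expansions are unconditional, i.e. for every UMD Banach space. -/
def UMDBounded (α β : ι → DyadicI) (p : ℝ) : Prop :=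
  ∀ (E : Type) [NormedAddCommGroup E] [NormedSpace ℝ E] [CompleteSpace E],
    HaarUnconditional E 2 → RearrangementBounded E α β p

lemma UMDBounded.rearrangementBounded_swap (hα : Function.Injective α)
    (hβ : Function.Injective β) (hpq : p.HolderConjugate q) (h : UMDBounded α β p) {E : Type}
    [NormedAddCommGroup E] [NormedSpace ℝ E] (hE : HaarUnconditional E 2) :
    RearrangementBounded E β α q := by
  have hE' : HaarUnconditional (StrongDual ℝ E) 2 := hE.strongDual .two_two
  exact .of_strongDual hα hβ hpq (hE'.of_one_lt one_lt_two hpq.lt) (h _ hE')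

lemma UMDBounded.maximalBound (hα : Function.Injective α) (hβ : Function.Injective β)
    (hp : 1 < p) (h : UMDBounded α β p) : MaximalBound β α := by
  obtain ⟨q, hq, hqp⟩ := exists_between hp
  have : Fact (1 ≤ ENNReal.ofReal q) := ⟨ENNReal.one_le_ofReal.2 hq.le⟩
  have hq0 : 0 < q := one_pos.trans hq
  have on_lp := h (lp (fun _ : ι => ℝ) (ENNReal.ofReal q))
    ((haarUnconditional_lp hq).of_one_lt hq one_lt_two)
  exact (on_lp.pathSumBound hq0).maximalBound hα hβ ((one_lt_div hq0).2 hqp)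

theorem UMDBounded.swap (hα : Function.Injective α) (hβ : Function.Injective β)
    (hpq : p.HolderConjugate q) (h : UMDBounded α β p) : UMDBounded β α q :=
  fun _ _ _ _ hE => h.rearrangementBounded_swap hα hβ hpq hE

lemma UMDBounded.of_le (hα : Function.Injective α) (hβ : Function.Injective β) (hq : 1 < q)
    (hqp : q ≤ p) (hM : MaximalBound α β) (h : UMDBounded α β p) : UMDBounded α β q := by
  rcases hqp.eq_or_lt with rfl | hqp
  · exact h
  · exact fun E _ _ _ hE =>
      (h E hE).of_lt hα hβ hq hqp (hE.of_one_lt one_lt_two (hq.trans hqp)) hM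

theorem UMDBounded.of_one_lt (hα : Function.Injective α) (hβ : Function.Injective β)
    (hp : 1 < p) (hq : 1 < q) (h : UMDBounded α β p) : UMDBounded α β q := by
  have hpp := Real.HolderConjugate.conjExponent hp
  have hqq := Real.HolderConjugate.conjExponent hq
  have h_swap := h.swap hα hβ hpp
  rcases le_or_gt q p with hqp | hpq
  · exact h.of_le hα hβ hq hqp (h_swap.maximalBound hβ hα hpp.symm.lt)
  · exact (h_swap.of_le hβ hα hqq.symm.lt (lt_of_holderConjugate_of_lt hpp hqq hpq).le
      (h.maximalBound hα hβ hp)).swap hβ hα hqq.symm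

theorem UMDBounded.rearrangementBounded (hα : Function.Injective α) (hβ : Function.Injective β)
    (hp : 1 < p) (hq : 1 < q) (h : UMDBounded α β p) {E : Type} [NormedAddCommGroup E]
    [NormedSpace ℝ E] (hE : HaarUnconditional E 2) :
    RearrangementBounded E α β q ∧ RearrangementBounded E β α q := by
  have hpp := Real.HolderConjugate.conjExponent hp
  have hqq := Real.HolderConjugate.conjExponent hq
  refine ⟨((h.swap hα hβ hpp).of_one_lt hβ hα hpp.symm.lt hqq.symm.lt).rearrangementBounded_swap
    hβ hα hqq.symm hE, (h.of_one_lt hα hβ hp hqq.symm.lt).rearrangementBounded_swap hα hβ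
    hqq.symm hE⟩

end Universal

/-! ### Haar expansions on `[0,1]` -/

section UnitInterval

lemma floor_mul_two_pow_succ_div_two (t : ℝ) (N : ℕ) :
    ⌊t * 2 ^ (N + 1)⌋₊ / 2 = ⌊t * 2 ^ N⌋₊ := by
  rw [← Nat.floor_div_ofNat, pow_succ, ← mul_assoc]
  exact congrArg _ (mul_div_cancel_right₀ _ two_ne_zero)

lemma nodeHaar_floor (I : DyadicI) (t : ℝ) {N : ℕ} (hN : I.n < N) :
    nodeHaar I N ⌊t * 2 ^ N⌋₊ =
      if I.k = ⌊t * 2 ^ (I.n + 1)⌋₊ / 2 then (-1 : ℝ) ^ ⌊t * 2 ^ (I.n + 1)⌋₊ else 0 := by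
  induction N, hN using Nat.le_induction with
  | base =>
    rw [nodeHaar_succ, nodeHaar_eq_zero_of_le I le_rfl]
    simp only [true_and, mul_ite, mul_one, mul_zero, zero_add]
  | succ N hN ih =>
    rw [nodeHaar_succ, floor_mul_two_pow_succ_div_two, ih, if_neg (c := _ ∧ _) (by lia), mul_zero,
      add_zero]

lemma mem_Ico_add_half_len_iff (I : DyadicI) {t : ℝ} (ht : 0 ≤ t) (e : ℕ) :
    t ∈ Ico (I.lep + e * (I.len / 2)) (I.lep + (e + 1) * (I.len / 2)) ↔
      ⌊t * 2 ^ (I.n + 1)⌋₊ = 2 * I.k + e := by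
  have h2 : (0 : ℝ) < 2 ^ (I.n + 1) := by positivity
  have endpoint : ∀ s : ℝ, I.lep + s * (I.len / 2) = (2 * I.k + s) / 2 ^ (I.n + 1) := fun s => by
    rw [lep, len, zpow_neg, zpow_natCast, pow_succ]
    field_simp
  rw [endpoint, endpoint, Nat.floor_eq_iff (by positivity), mem_Ico, div_le_iff₀ h2,
    lt_div_iff₀ h2]
  push_cast
  rw [add_assoc]

lemma haar_eq_nodeHaar (I : DyadicI) {t : ℝ} (ht : 0 ≤ t) {N : ℕ} (hN : I.n < N) :
    I.haar t = nodeHaar I N ⌊t * 2 ^ N⌋₊ := by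
  have left := mem_Ico_add_half_len_iff I ht 0
  have right := mem_Ico_add_half_len_iff I ht 1
  simp only [Nat.cast_zero, Nat.cast_one, zero_mul, zero_add, add_zero, one_mul, one_add_one_eq_two,
    mul_div_cancel₀ I.len (two_ne_zero' ℝ)] at left right
  rw [nodeHaar_floor I t hN, haar]
  simp only [left, right]
  generalize ⌊t * 2 ^ (I.n + 1)⌋₊ = m
  rcases eq_or_ne m (2 * I.k) with rfl | h₀
  · rw [if_pos rfl, if_pos (by lia), (even_two_mul _).neg_one_pow]
  rcases eq_or_ne m (2 * I.k + 1) with rfl | h₁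
  · rw [if_neg h₀, if_pos rfl, if_pos (by lia), (odd_two_mul_add_one _).neg_one_pow]
  · rw [if_neg h₀, if_neg h₁, if_neg (by lia)]

lemma indicator_toSet_eq_abs_haar (I : DyadicI) (t : ℝ) :
    indicator (toSet I) (fun _ => (1 : ℝ)) t = |I.haar t| := by
  have h := half_pos (len_pos I)
  have split : toSet I = Ico I.lep (I.lep + I.len / 2) ∪
      Ico (I.lep + I.len / 2) (I.lep + I.len) :=
    (Ico_union_Ico_eq_Ico (by linarith) (by linarith)).symm
  rw [split, indicator_apply, haar]
  split_ifs <;> simp_all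

lemma floor_mul_two_pow_eq {N j : ℕ} {t : ℝ} (ht : t ∈ Ico ((j : ℝ) / 2 ^ N) ((j + 1) / 2 ^ N)) :
    ⌊t * 2 ^ N⌋₊ = j := by
  have h2 : (0 : ℝ) < 2 ^ N := by positivity
  have lower := (div_le_iff₀ h2).1 ht.1
  exact (Nat.floor_eq_iff ((Nat.cast_nonneg j).trans lower)).2 ⟨lower, (lt_div_iff₀ h2).1 ht.2⟩

lemma Ico_zero_one_eq_biUnion (N : ℕ) : Ico (0 : ℝ) 1 =
    ⋃ j ∈ Finset.range (2 ^ N), Ico ((j : ℝ) / 2 ^ N) ((j + 1) / 2 ^ N) := by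
  have h2 : (0 : ℝ) < 2 ^ N := by positivity
  ext t
  simp only [mem_iUnion, Finset.mem_range, exists_prop]
  constructor
  · rintro ⟨h0, h1⟩
    have ht : 0 ≤ t * 2 ^ N := by positivity
    refine ⟨⌊t * 2 ^ N⌋₊, (Nat.floor_lt ht).2 ?_, (div_le_iff₀ h2).2 (Nat.floor_le ht),
      (lt_div_iff₀ h2).2 (Nat.lt_floor_add_one _)⟩
    push_cast
    exact mul_lt_of_lt_one_left h2 h1
  · rintro ⟨j, hj, h0, h1⟩
    refine ⟨le_trans (by positivity) h0, h1.trans_le ((div_le_one h2).2 ?_)⟩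
    exact_mod_cast hj

lemma setIntegral_floor_eq_levelAvg (N : ℕ) (φ : ℕ → ℝ) :
    ∫ t in Icc (0 : ℝ) 1, φ ⌊t * 2 ^ N⌋₊ = levelAvg N φ := by
  have constant : ∀ j : ℕ, EqOn (fun t : ℝ => φ ⌊t * 2 ^ N⌋₊) (fun _ => φ j)
      (Ico ((j : ℝ) / 2 ^ N) ((j + 1) / 2 ^ N)) :=
    fun j t ht => congrArg φ (floor_mul_two_pow_eq ht)
  have disjoint : (Finset.range (2 ^ N) : Set ℕ).Pairwise (Function.onFun Disjoint
      fun j : ℕ => Ico ((j : ℝ) / 2 ^ N) ((j + 1) / 2 ^ N)) := fun i _ j _ hij =>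
    disjoint_left.2 fun t hi hj => hij <|
      (floor_mul_two_pow_eq hi).symm.trans (floor_mul_two_pow_eq hj)
  rw [integral_Icc_eq_integral_Ico, Ico_zero_one_eq_biUnion N,
    integral_biUnion_finset _ (fun _ _ => measurableSet_Ico) disjoint fun j _ =>
      (integrableOn_congr_fun (constant j) measurableSet_Ico).2 (integrableOn_const (by simp)),
    levelAvg_eq_sum_div, Finset.sum_div]
  refine Finset.sum_congr rfl fun j _ => ?_
  rw [setIntegral_congr_fun measurableSet_Ico (constant j), setIntegral_const,
    Real.volume_real_Ico_of_le (by gcongr; exact le_add_of_nonneg_right zero_le_one), ← sub_div,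
    add_sub_cancel_left, smul_eq_mul, one_div_mul_eq_div]

end UnitInterval

section Norms

variable {ι : Type*} {α β : ι → DyadicI} {L : Finset ι} {N : ℕ} {E : Type*}
  [NormedAddCommGroup E] [NormedSpace ℝ E]

lemma setIntegral_norm_haar_eq_haarMoment (hL : ∀ i ∈ L, (α i).n < N) (p : ℝ) (x : ι → E) :
    ∫ t in Icc (0 : ℝ) 1, ‖∑ i ∈ L, (α i).haar t • x i‖ ^ p =
      haarMoment p N (treeFamily α L x) := by
  rw [haarMoment, ← setIntegral_floor_eq_levelAvg]
  refine setIntegral_congr_fun measurableSet_Icc fun t ht => ?_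
  simp only [haarSum_treeFamily]
  rw [Finset.sum_congr rfl fun i hi => by rw [haar_eq_nodeHaar _ ht.1 (hL i hi)]]

lemma setIntegral_sqrt_eq_levelAvg (hL : ∀ i ∈ L, (α i).n < N) (d : ι → ℝ) :
    ∫ t in Icc (0 : ℝ) 1, √(∑ i ∈ L, d i * indicator (toSet (α i)) (fun _ => (1 : ℝ)) t) =
      levelAvg N (fun c => √(pathSum (treeFamily α L d) N c)) := by
  rw [← setIntegral_floor_eq_levelAvg]
  refine setIntegral_congr_fun measurableSet_Icc fun t ht => ?_
  simp only [pathSum_treeFamily, indicator_toSet_eq_abs_haar]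
  rw [Finset.sum_congr rfl fun i hi => by rw [haar_eq_nodeHaar _ ht.1 (hL i hi), mul_comm]]

lemma sum_image_apply_sum_ite {V W : Type*} [AddCommMonoid V] [AddCommMonoid W]
    (hα : Function.Injective α) (x : ι → V) (F : DyadicI → V → W) :
    ∑ J ∈ L.image α, F J (∑ i ∈ L, if α i = J then x i else 0) = ∑ i ∈ L, F (α i) (x i) := by
  rw [Finset.sum_image hα.injOn]
  refine Finset.sum_congr rfl fun i hi => ?_
  simp only [hα.eq_iff, Finset.sum_ite_eq', if_pos hi]

lemma LpNormV_image (hα : Function.Injective α) (hL : ∀ i ∈ L, (α i).n < N) (p : ℝ) (x : ι → E) :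
    LpNormV p (L.image α) (fun J => ∑ i ∈ L, if α i = J then x i else 0) =
      haarMoment p N (treeFamily α L x) ^ (1 / p) := by
  have apply_sum := fun t => sum_image_apply_sum_ite (L := L) hα x fun J v => J.haar t • v
  simp only [LpNormV, apply_sum, setIntegral_norm_haar_eq_haarMoment hL]

lemma LpNormV_eq_haarMoment {s : Finset DyadicI} (hs : ∀ I ∈ s, I.n < N) (p : ℝ)
    (x : DyadicI → E) : LpNormV p s x = haarMoment p N (treeFamily id s x) ^ (1 / p) := by
  rw [← setIntegral_norm_haar_eq_haarMoment (α := id) hs]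
  rfl

lemma HpNormS_one_eq_levelAvg {s : Finset DyadicI} (hs : ∀ I ∈ s, I.n < N) (a : DyadicI → ℝ) :
    HpNormS 1 s a = levelAvg N (fun c => √(pathSum (treeFamily id s fun I => a I ^ 2) N c)) := by
  rw [← setIntegral_sqrt_eq_levelAvg (α := id) hs]
  simp only [HpNormS, sqFnS, div_one, Real.rpow_one, id]

lemma HpNormS_one_image (hα : Function.Injective α) (hL : ∀ i ∈ L, (α i).n < N) (a : ι → ℝ) :
    HpNormS 1 (L.image α) (fun J => ∑ i ∈ L, if α i = J then a i else 0) =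
      levelAvg N (fun c => √(pathSum (treeFamily α L fun i => a i ^ 2) N c)) := by
  have apply_sum := fun t => sum_image_apply_sum_ite (L := L) hα a fun J u =>
    u ^ 2 * indicator (toSet J) (fun _ => (1 : ℝ)) t
  simp only [HpNormS, sqFnS, div_one, Real.rpow_one, apply_sum, setIntegral_sqrt_eq_levelAvg hL]

end Norms

/-! ### Operator norms -/

section OperatorNorms

variable {E : Type*} [NormedAddCommGroup E] [NormedSpace ℝ E] {τ : DyadicI → DyadicI} {p : ℝ}

lemma exists_level_lt {ι : Type*} (α β : ι → DyadicI) (L : Finset ι) :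
    ∃ N, (∀ i ∈ L, (α i).n < N) ∧ ∀ i ∈ L, (β i).n < N := by
  refine ⟨L.sup (fun i => max (α i).n (β i).n) + 1, fun i hi => ?_, fun i hi => ?_⟩ <;>
  · have := Finset.le_sup (f := fun i => max (α i).n (β i).n) hi
    lia

lemma haarMoment_treeFamily_smul {ι : Type*} {t : ℝ} (ht : 0 ≤ t) (p : ℝ) (N : ℕ)
    (α : ι → DyadicI) (L : Finset ι) (x : ι → E) :
    haarMoment p N (treeFamily α L fun i => t • x i) =
      t ^ p * haarMoment p N (treeFamily α L x) := by
  rw [haarMoment, haarMoment, ← levelAvg_mul]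
  simp only [haarSum_treeFamily, smul_comm _ t, ← Finset.smul_sum, norm_smul, Real.norm_eq_abs,
    abs_of_nonneg ht, Real.mul_rpow ht (norm_nonneg _)]

lemma le_rpow_mul_of_forall_pos {P Q C : ℝ} (hp : 0 < p) (hP : 0 ≤ P) (hQ : 0 ≤ Q) (hC : 0 ≤ C)
    (h : ∀ t : ℝ, 0 < t → t ^ p * Q ≤ 1 → (t ^ p * P) ^ (1 / p) ≤ C) : P ≤ C ^ p * Q := by
  have bound : ∀ δ > 0, P ≤ C ^ p * (Q + δ) := fun δ hδ => by
    have hQδ : 0 < Q + δ := by positivity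
    have scale : ((Q + δ)⁻¹ ^ (1 / p)) ^ p = (Q + δ)⁻¹ := by
      rw [one_div, Real.rpow_inv_rpow (inv_pos.2 hQδ).le hp.ne']
    have := h ((Q + δ)⁻¹ ^ (1 / p)) (by positivity) (by
      rw [scale, inv_mul_le_one₀ hQδ]
      exact le_add_of_nonneg_right hδ.le)
    rwa [scale, one_div, Real.rpow_inv_le_iff_of_pos (by positivity) hC hp,
      inv_mul_le_iff₀ hQδ, mul_comm] at this
  refine ge_of_tendsto (x := nhdsWithin 0 (Ioi 0)) ?_ (eventually_mem_nhdsWithin.mono bound)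
  have limit : ContinuousAt (fun δ => C ^ p * (Q + δ)) 0 := by fun_prop
  simpa only [ContinuousAt, add_zero] using limit.tendsto.mono_left nhdsWithin_le_nhds

theorem rearrangementBounded_of_lpOpNorm_lt_top (hτ : Function.Injective τ) (hp : 0 < p)
    (h : lpOpNorm τ p E < ⊤) : RearrangementBounded E id τ p := by
  refine ⟨(lpOpNorm τ p E).toReal ^ p, by positivity, fun N L x hL hLτ =>
    le_rpow_mul_of_forall_pos hp (haarMoment_nonneg _ _ _) (haarMoment_nonneg _ _ _)
      ENNReal.toReal_nonneg fun t ht unit => ?_⟩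
  rw [← haarMoment_treeFamily_smul ht.le] at unit ⊢
  have norm_le : LpNormV p L (fun I => t • x I) ≤ 1 := by
    rw [LpNormV_eq_haarMoment hL]
    exact Real.rpow_le_one (haarMoment_nonneg _ _ _) unit (by positivity)
  have image_le := (ENNReal.ofReal_le_iff_le_toReal h.ne).1 <|
    le_iSup_of_le L <| le_iSup_of_le (fun I => t • x I) <| le_iSup_of_le norm_le le_rfl
  replace image_le := (LpNormV_image hτ hLτ p _).symm.trans_le image_le
  simpa only [smul_comm t, lenRatio, id] using image_le

lemma rpow_one_div_le_of_le_mul {P Q C : ℝ} (hp : 0 < p) (hP : 0 ≤ P) (hQ : 0 ≤ Q) (hC : 0 ≤ C)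
    (h : P ≤ C * Q) (hQ1 : Q ^ (1 / p) ≤ 1) : P ^ (1 / p) ≤ C ^ (1 / p) :=
  calc P ^ (1 / p) ≤ (C * Q) ^ (1 / p) := by gcongr
    _ = C ^ (1 / p) * Q ^ (1 / p) := Real.mul_rpow hC hQ
    _ ≤ C ^ (1 / p) := mul_le_of_le_one_right (by positivity) hQ1

theorem RearrangementBounded.lpOpNorm_lt_top (hτ : Function.Injective τ) (hp : 0 < p)
    (h : RearrangementBounded E id τ p) : lpOpNorm τ p E < ⊤ := by
  obtain ⟨C, hC, h⟩ := h
  refine (iSup_le fun s => iSup_le fun x => iSup_le fun hx => ENNReal.ofReal_le_ofReal ?_).trans_lt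
    (ENNReal.ofReal_lt_top (r := C ^ (1 / p)))
  obtain ⟨N, hN, hNτ⟩ := exists_level_lt id τ s
  rw [LpNormV_eq_haarMoment hN] at hx
  exact (LpNormV_image hτ hNτ p _).trans_le <| rpow_one_div_le_of_le_mul hp
    (haarMoment_nonneg _ _ _) (haarMoment_nonneg _ _ _) hC (h N s x hN hNτ) hx

theorem RearrangementBounded.lpInvOpNorm_lt_top (hτ : Function.Injective τ) (hp : 0 < p)
    (h : RearrangementBounded E τ id p) : lpInvOpNorm τ p E < ⊤ := by
  obtain ⟨C, hC, h⟩ := h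
  refine (iSup_le fun s => iSup_le fun x => iSup_le fun hx => ENNReal.ofReal_le_ofReal ?_).trans_lt
    (ENNReal.ofReal_lt_top (r := C ^ (1 / p)))
  obtain ⟨N, hNτ, hN⟩ := exists_level_lt τ id s
  rw [LpNormV_image hτ hNτ] at hx
  exact (LpNormV_eq_haarMoment hN p _).trans_le <| rpow_one_div_le_of_le_mul hp
    (haarMoment_nonneg _ _ _) (haarMoment_nonneg _ _ _) hC (h N s x hNτ hN) hx

theorem MaximalBound.h1InvOpNorm_lt_top (hτ : Function.Injective τ) (h : MaximalBound τ id) :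
    h1InvOpNorm τ < ⊤ := by
  obtain ⟨C, hC, h⟩ := h.exists_sqrt_pathSum_le hτ Function.injective_id
  refine (iSup_le fun s => iSup_le fun a => iSup_le fun ha => ENNReal.ofReal_le_ofReal ?_).trans_lt
    (ENNReal.ofReal_lt_top (r := C))
  obtain ⟨N, hNτ, hN⟩ := exists_level_lt τ id s
  rw [HpNormS_one_image hτ hNτ] at ha
  simp only [HpNormS_one_eq_levelAvg hN, mul_pow]
  exact (h N s _ (fun I => sq_nonneg (a I)) hNτ hN).trans (mul_le_of_le_one_right hC ha)

end OperatorNorms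

/-! ### The UMD property -/

section UMD

variable {E : Type*} [NormedAddCommGroup E] [NormedSpace ℝ E]

/-- The dyadic intervals of level less than `N`. -/
def intervalsBelow (N : ℕ) : Finset DyadicI :=
  (Finset.univ : Finset (Σ n : Fin N, Fin (2 ^ (n : ℕ)))).image fun z => ⟨z.1, z.2, z.2.2⟩

lemma mem_intervalsBelow {N : ℕ} {I : DyadicI} : I ∈ intervalsBelow N ↔ I.n < N := by
  simp only [intervalsBelow, Finset.mem_image, Finset.mem_univ, true_and]
  constructor
  · rintro ⟨z, rfl⟩
    exact z.1.2
  · exact fun h => ⟨⟨⟨I.n, h⟩, ⟨I.k, I.hk⟩⟩, rfl⟩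

lemma haarMoment_treeFamily_intervalsBelow (p : ℝ) (N : ℕ) (X : ℕ → ℕ → E) :
    haarMoment p N (treeFamily id (intervalsBelow N) fun I => X I.n I.k) = haarMoment p N X :=
  haarMoment_congr fun n hn j hj => treeFamily_node (i := ⟨n, j, hj⟩) Function.injective_id _
    (mem_intervalsBelow.2 hn)

theorem haarUnconditional_of_isUMD (h : IsUMD E) {r : ℝ} (hr : 1 < r) :
    HaarUnconditional E r := by
  obtain ⟨β, h⟩ := h r hr
  have hr0 : 0 < r := one_pos.trans hr
  refine ⟨|β| ^ r, by positivity, fun N X ε hε => ?_⟩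
  have levels : ∀ I ∈ intervalsBelow N, I.n < N := fun I hI => mem_intervalsBelow.1 hI
  have bound := h (intervalsBelow N) (fun I => X I.n I.k) (fun I => ε I.n I.k) fun I => hε _ _
  have hX := haarMoment_nonneg r N X
  rw [LpNormV_eq_haarMoment levels, LpNormV_eq_haarMoment levels,
    haarMoment_treeFamily_intervalsBelow r N fun n j => ε n j • X n j,
    haarMoment_treeFamily_intervalsBelow r N X] at bound
  replace bound := Real.rpow_le_rpow (Real.rpow_nonneg (haarMoment_nonneg _ _ _) _) (bound.trans
    (mul_le_mul_of_nonneg_right (le_abs_self β) (Real.rpow_nonneg hX _))) hr0.le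
  rwa [Real.mul_rpow (abs_nonneg β) (Real.rpow_nonneg hX _), one_div,
    Real.rpow_inv_rpow (haarMoment_nonneg _ _ _) hr0.ne', Real.rpow_inv_rpow hX hr0.ne'] at bound

theorem HaarUnconditional.isUMD (h : HaarUnconditional E 2) : IsUMD E := by
  intro r hr
  obtain ⟨β, hβ, h⟩ := h.of_one_lt one_lt_two hr
  have hr0 : 0 < r := one_pos.trans hr
  refine ⟨β ^ (1 / r), fun s x ε hε => ?_⟩
  obtain ⟨N, hN, -⟩ := exists_level_lt id id s
  rw [LpNormV_eq_haarMoment hN, LpNormV_eq_haarMoment hN,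
    ← Real.mul_rpow hβ (haarMoment_nonneg _ _ _)]
  refine Real.rpow_le_rpow (haarMoment_nonneg _ _ _) ?_ (by positivity)
  set ε' : ℕ → ℕ → ℝ := fun n j => if hj : j < 2 ^ n then ε ⟨n, j, hj⟩ else 1
  have hε' : ∀ I : DyadicI, ε' I.n I.k = ε I := fun I => dif_pos I.hk
  have bound := h N (treeFamily id s x) ε' fun n j => by
    simp only [ε']
    split_ifs
    exacts [hε _, .inl rfl]
  simpa only [apply_treeFamily Function.injective_id x (fun n j v => ε' n j • v)
    (fun _ _ => smul_zero _), id, hε'] using bound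

end UMD

end HaarRearrangement

theorem statement13_general (τ : DyadicI → DyadicI) (hτ : Function.Injective τ)
    (p₀ : ℝ) (hp₀ : 1 < p₀)
    (h : ∀ (E : Type) [NormedAddCommGroup E] [NormedSpace ℝ E] [CompleteSpace E],
      IsUMD E → lpOpNorm τ p₀ E < ⊤) :
    h1InvOpNorm τ < ⊤ ∧
      ∀ (p : ℝ), 1 < p →
        ∀ (E : Type) [NormedAddCommGroup E] [NormedSpace ℝ E],
          IsUMD E → lpOpNorm τ p E < ⊤ ∧ lpInvOpNorm τ p E < ⊤ := by
  have hU : HaarRearrangement.UMDBounded id τ p₀ := fun E _ _ _ hE =>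
    HaarRearrangement.rearrangementBounded_of_lpOpNorm_lt_top hτ (one_pos.trans hp₀) (h E hE.isUMD)
  refine ⟨(hU.maximalBound Function.injective_id hτ hp₀).h1InvOpNorm_lt_top hτ,
    fun p hp E _ _ hE => ?_⟩
  obtain ⟨fwd, bwd⟩ := hU.rearrangementBounded Function.injective_id hτ hp₀ hp
    (HaarRearrangement.haarUnconditional_of_isUMD hE one_lt_two)
  exact ⟨fwd.lpOpNorm_lt_top hτ (one_pos.trans hp), bwd.lpInvOpNorm_lt_top hτ (one_pos.trans hp)⟩

/-- Let `τ : D → D` be injective and suppose there is `1 < p₀ < ∞`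
such that for every Banach space `E` with the UMD property `T_{τ,p₀} ⊗ Id_E` is
bounded on `L^{p₀}_E`. Then `‖T_{τ,1}⁻¹‖₁ < ∞`, and for every `1 < p < ∞` and every
UMD space `E`, both `T_{τ,p} ⊗ Id_E` and its inverse `T_{τ,p}⁻¹ ⊗ Id_E` are bounded
on `L^p_E` (i.e. `‖T_{τ,p} ⊗ Id_E‖_{L^p_E} · ‖T_{τ,p}⁻¹ ⊗ Id_E‖_{L^p_E} < ∞`).
The value `p₀ = 2` is not excluded. -/
theorem statement13 (τ : DyadicI → DyadicI) (hτ : Function.Injective τ)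
    (p₀ : ℝ) (hp₀ : 1 < p₀)
    (h : ∀ (E : Type) [NormedAddCommGroup E] [NormedSpace ℝ E] [CompleteSpace E],
      IsUMD E → lpOpNorm τ p₀ E < ⊤) :
    h1InvOpNorm τ < ⊤ ∧
      ∀ (p : ℝ), 1 < p →
        ∀ (E : Type) [NormedAddCommGroup E] [NormedSpace ℝ E] [CompleteSpace E],
          IsUMD E → lpOpNorm τ p E < ⊤ ∧ lpInvOpNorm τ p E < ⊤ := by
  obtain ⟨h1, hLp⟩ := statement13_general τ hτ p₀ hp₀ h
  exact ⟨h1, fun p hp E _ _ _ => hLp p hp E⟩
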